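/- For every nonnegative integer n, the number sT(5n+4) of partition pairs (π₁,π₂) ∈ 𝒮𝒯 with |π₁|+|π₂| = 5n+4 is divisible by 5. -/

import Mathlib

open scoped BigOperators

noncomputable section

/-- A partition is a finite multiset of positive integers. -/
def IsPartition (π : Multiset ℕ) : Prop := ∀ x ∈ π, 0 < x

/-- The smallest part of a partition, with the convention `s(∅) = ∞`. -/
def sPart (π : Multiset ℕ) : ℕ∞ := (π.map (fun x => (x : ℕ∞))).inf

/-- The largest part of a partition, with the convention `ℓ(∅) = 0`. -/
def lPart (π : Multiset ℕ) : ℕ := π.sup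

/-- Membership in the set 𝒮𝒯 of partition pairs: π₁ is nonempty,
`s(π₁) ≤ s(π₂)`, and `ℓ(π₂) < 2·s(π₁)`. -/
def InST (p : Multiset ℕ × Multiset ℕ) : Prop :=
  IsPartition p.1 ∧ IsPartition p.2 ∧ p.1 ≠ 0 ∧
    sPart p.1 ≤ sPart p.2 ∧ (lPart p.2 : ℕ∞) < 2 * sPart p.1

/-- `sT n` is the number of pairs `(π₁, π₂) ∈ 𝒮𝒯` with `|π₁| + |π₂| = n`. -/
def sT (n : ℕ) : ℕ :=
  {p : Multiset ℕ × Multiset ℕ | InST p ∧ p.1.sum + p.2.sum = n}.ncard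

/-!
Write `E = (q; q)_∞` for Euler's product and `φ` for the substitution `q ↦ q ^ 3`. The generating
function of `sT` is `N / E` with `N = ∑ m, q ^ (m + 1) (q; q)_m ^ 2 / (q; q)_(2 m + 1)`, and three
facts about integral series feed a computation modulo `5`, where the class of a term is that of
its exponent modulo `5`.

* `N E ^ 2` is the sum of the terms
  `(-1) ^ (i + j) (2 i + 1) q ^ (t i + i + 1 + t j + (2 i + 1) j)`, with `t k = k (k + 1) / 2`;
  exponents of class `4` occur only where `5` divides `2 i + 1`.
* `N φ(E) ^ 3 = E (s + φ(c - s))`, where `s` generates the sums of divisors and `c` is another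
  Lambert series.
* The generating series `T = φ(E) ^ 3 / E` of 3-cores has as its terms of class `3` exactly
  `q ^ 8 T(q ^ 25)`, since its coefficients are values of a divisor sum twisted by a character.

Modulo `5` one has `E = e (1 - u) ^ 2` with `e` of class `0` and `u` of class `1`, and
`q E(q ^ 25) = 2 u e`; differentiating gives `s (1 - u) = 2 u`. With `v = φ(u)`, the third fact
becomes `v + u ^ 3 + u ^ 2 v ^ 2 + u v ^ 4 + u ^ 4 v ^ 3 = 0`. The class `4` part of `N / E` is,
up to a unit, a combination of `u` times this relation and of the class `4` part of
`(1 + v + v ^ 2 + v ^ 3 + v ^ 4) φ(c - s)`. The first fact equates the latter with `u` times a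
series in `q ^ 3`, and comparing orders of vanishing modulo `3` makes it `0`.
-/

namespace PartitionPair

open PowerSeries Finset Filter
open scoped PowerSeries.WithPiTopology Topology

local notation "φ" => PowerSeries.expand 3 three_ne_zero

section Summability

variable {R ι : Type*} [CommRing R]

lemma eq_of_forall_X_pow_dvd_sub {f g : R⟦X⟧} (h : ∀ n, X ^ n ∣ f - g) : f = g := by
  rw [← sub_eq_zero]
  ext d
  exact X_pow_dvd_iff.mp (h (d + 1)) d d.lt_succ_self

variable [TopologicalSpace R]

lemma summable_of_X_pow_dvd {f : ι → R⟦X⟧} {w : ι → ℕ} (hw : Tendsto w cofinite atTop)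
    (h : ∀ i, X ^ w i ∣ f i) : Summable f := by
  rw [WithPiTopology.summable_iff_summable_coeff]
  intro d
  refine summable_of_hasFiniteSupport ?_
  refine (eventually_cofinite.mp (hw.eventually_gt_atTop d)).subset fun i hi hd ↦ hi ?_
  exact X_pow_dvd_iff.mp (h i) d hd

lemma tendsto_cofinite_atTop_of_natAbs_le {w : ℤ → ℕ} {c : ℕ} (h : ∀ i, i.natAbs ≤ w i + c) :
    Tendsto w cofinite atTop := by
  refine tendsto_atTop.mpr fun N ↦ eventually_cofinite.mpr ?_
  refine (Set.finite_Icc (-(N + c : ℤ)) (N + c)).subset fun i hi ↦ ?_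
  have := h i
  simp only [Set.mem_ofPred_eq, not_le, Set.mem_Icc] at hi ⊢
  omega

lemma tendsto_cofinite_atTop_of_max_le {w : ℕ × ℕ → ℕ} (h : ∀ i, max i.1 i.2 ≤ w i) :
    Tendsto w cofinite atTop := by
  refine tendsto_atTop.mpr fun N ↦ eventually_cofinite.mpr ?_
  refine ((Set.finite_lt_nat N).prod (Set.finite_lt_nat N)).subset fun i hi ↦ ?_
  have := h i
  simp only [Set.mem_ofPred_eq, not_le, Set.mem_prod] at hi ⊢
  omega

lemma summable_nat_of_X_pow_dvd {f : ℕ → R⟦X⟧} (h : ∀ i, X ^ i ∣ f i) : Summable f :=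
  summable_of_X_pow_dvd (Nat.cofinite_eq_atTop ▸ tendsto_id) h

lemma summable_prod_of_X_pow_dvd {f : ℕ × ℕ → R⟦X⟧} (h : ∀ i, X ^ max i.1 i.2 ∣ f i) :
    Summable f :=
  summable_of_X_pow_dvd (tendsto_cofinite_atTop_of_max_le fun _ ↦ le_rfl) h

lemma tendsto_of_X_pow_dvd_sub {f : ℕ → R⟦X⟧} {g : R⟦X⟧} (h : ∀ n, X ^ n ∣ f n - g) :
    Tendsto f atTop (𝓝 g) := by
  rw [WithPiTopology.tendsto_iff_coeff_tendsto]
  intro d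
  refine tendsto_nhds_of_eventually_eq ?_
  filter_upwards [eventually_gt_atTop d] with n hn
  exact sub_eq_zero.mp (by rw [← map_sub]; exact X_pow_dvd_iff.mp (h n) d hn)

lemma continuous_expand {k : ℕ} (hk : k ≠ 0) :
    Continuous (expand k hk : R⟦X⟧ →ₐ[R] R⟦X⟧) := by
  refine continuous_iff_continuousAt.mpr fun f ↦ ?_
  refine (WithPiTopology.tendsto_iff_coeff_tendsto R _ _ _).mpr fun d ↦ ?_
  simp only [coeff_expand]
  split_ifs
  · exact (WithPiTopology.continuous_coeff R _).tendsto f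
  · exact tendsto_const_nhds

lemma summable_expand {k : ℕ} (hk : k ≠ 0) {f : ι → R⟦X⟧} (hf : Summable f) :
    Summable fun i ↦ expand k hk (f i) :=
  hf.map _ (continuous_expand hk)

variable [T2Space R]

lemma coeff_tsum {f : ι → R⟦X⟧} (hf : Summable f) (d : ℕ) :
    coeff d (∑' i, f i) = ∑' i, coeff d (f i) :=
  ((WithPiTopology.hasSum_iff_hasSum_coeff R).mp hf.hasSum d).tsum_eq.symm

lemma X_pow_dvd_tsum {f : ι → R⟦X⟧} {n : ℕ} (h : ∀ i, X ^ n ∣ f i) : X ^ n ∣ ∑' i, f i := by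
  by_cases hf : Summable f
  · refine X_pow_dvd_iff.mpr fun m hm ↦ ?_
    simp [coeff_tsum hf, fun i ↦ X_pow_dvd_iff.mp (h i) m hm]
  · simp [tsum_eq_zero_of_not_summable hf]

lemma expand_tsum {k : ℕ} (hk : k ≠ 0) {f : ι → R⟦X⟧} (hf : Summable f) :
    expand k hk (∑' i, f i) = ∑' i, expand k hk (f i) :=
  hf.map_tsum _ (continuous_expand hk)

variable [IsTopologicalRing R]

lemma tsum_comm_of_X_pow_dvd {f : ℕ → ℕ → R⟦X⟧} (h : ∀ i j, X ^ max i j ∣ f i j) :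
    ∑' i, ∑' j, f i j = ∑' j, ∑' i, f i j :=
  (Summable.tsum_comm' (f := f) (summable_prod_of_X_pow_dvd fun i ↦ h i.1 i.2)
    (fun i ↦ summable_nat_of_X_pow_dvd fun j ↦ (pow_dvd_pow X (le_max_right i j)).trans (h i j))
    fun j ↦ summable_nat_of_X_pow_dvd fun i ↦
      (pow_dvd_pow X (le_max_left i j)).trans (h i j)).symm

lemma tendsto_tsum_of_X_pow_dvd {f : ℕ → ℕ → R⟦X⟧} {g : ℕ → R⟦X⟧}
    (hf : ∀ n i, X ^ i ∣ f n i) (hg : ∀ i, X ^ i ∣ g i)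
    (h : ∀ i, Tendsto (f · i) atTop (𝓝 (g i))) :
    Tendsto (fun n ↦ ∑' i, f n i) atTop (𝓝 (∑' i, g i)) := by
  have coeff_eq : ∀ {u : ℕ → R⟦X⟧} (d : ℕ), (∀ i, X ^ i ∣ u i) →
      coeff d (∑' i, u i) = ∑ i ∈ range (d + 1), coeff d (u i) := by
    intro u d hu
    rw [coeff_tsum (summable_nat_of_X_pow_dvd hu)]
    refine tsum_eq_sum fun i hi ↦ X_pow_dvd_iff.mp (hu i) d ?_
    simpa [Nat.lt_succ_iff] using hi
  refine (WithPiTopology.tendsto_iff_coeff_tendsto R _ _ _).mpr fun d ↦ ?_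
  simp only [coeff_eq d (hf _), coeff_eq d hg]
  exact tendsto_finsetSum _ fun i _ ↦
    (WithPiTopology.tendsto_iff_coeff_tendsto R _ _ _).mp (h i) d

end Summability

section QPochhammer

variable {R : Type*} [CommRing R]

/-- The `q`-shifted factorial `(q ^ a; q)_n`, with `q = X`. -/
def qPoch (a n : ℕ) : R⟦X⟧ := ∏ i ∈ range n, (1 - X ^ (a + i))

/-- The inverse `1 / (q; q)_n` of a `q`-factorial, with `q = X`. -/
def qFactInv (n : ℕ) : R⟦X⟧ := ∏ i ∈ range n, invOfUnit (1 - X ^ (1 + i)) 1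

lemma one_sub_X_pow_mul_invOfUnit {n : ℕ} (hn : n ≠ 0) :
    (1 - X ^ n) * invOfUnit (1 - X ^ n : R⟦X⟧) 1 = 1 :=
  mul_invOfUnit _ _ (by simp [hn])

lemma isUnit_one_sub_X_pow {n : ℕ} (hn : n ≠ 0) : IsUnit (1 - X ^ n : R⟦X⟧) :=
  .of_mul_eq_one _ (one_sub_X_pow_mul_invOfUnit hn)

@[simp] lemma qPoch_zero (a : ℕ) : (qPoch a 0 : R⟦X⟧) = 1 := prod_range_zero _

@[simp] lemma qFactInv_zero : (qFactInv 0 : R⟦X⟧) = 1 := prod_range_zero _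

lemma qPoch_succ (a n : ℕ) : (qPoch a (n + 1) : R⟦X⟧) = qPoch a n * (1 - X ^ (a + n)) :=
  prod_range_succ _ _

lemma qPoch_succ' (a n : ℕ) : (qPoch a (n + 1) : R⟦X⟧) = (1 - X ^ a) * qPoch (a + 1) n := by
  simp only [qPoch, prod_range_succ', add_zero, add_right_comm _ 1, add_assoc, mul_comm]

lemma qPoch_one_add (n m : ℕ) :
    (qPoch 1 (n + m) : R⟦X⟧) = qPoch 1 n * qPoch (n + 1) m := by
  simp only [qPoch, prod_range_add, add_comm, add_assoc, add_left_comm]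

lemma qFactInv_eq_mul_succ (n : ℕ) :
    (qFactInv n : R⟦X⟧) = (1 - X ^ (n + 1)) * qFactInv (n + 1) := by
  rw [qFactInv, qFactInv, prod_range_succ, add_comm n]
  linear_combination -(∏ i ∈ range n, invOfUnit (1 - X ^ (1 + i) : R⟦X⟧) 1) *
    one_sub_X_pow_mul_invOfUnit (R := R) (n := 1 + n) (by omega)

lemma qPoch_one_mul_qFactInv (n : ℕ) : (qPoch 1 n * qFactInv n : R⟦X⟧) = 1 := by
  rw [qPoch, qFactInv, ← prod_mul_distrib]
  exact prod_eq_one fun i _ ↦ one_sub_X_pow_mul_invOfUnit (by omega)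

variable [TopologicalSpace R]

/-- Euler's product `(q; q)_∞`, with `q = X`. -/
def euler : R⟦X⟧ := ∏' i, (1 - X ^ (i + 1))

/-- The inverse `1 / (q; q)_∞` of Euler's product, with `q = X`. -/
def eulerInv : R⟦X⟧ := ∏' i, invOfUnit (1 - X ^ (1 + i)) 1

lemma multipliable_invOfUnit_one_sub_X_pow :
    Multipliable fun i ↦ invOfUnit (1 - X ^ (1 + i) : R⟦X⟧) 1 := by
  have expand_inv (i : ℕ) : invOfUnit (1 - X ^ (1 + i) : R⟦X⟧) 1 =
      1 + X ^ (1 + i) * invOfUnit (1 - X ^ (1 + i) : R⟦X⟧) 1 := by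
    linear_combination one_sub_X_pow_mul_invOfUnit (R := R) (n := 1 + i) (by omega)
  simp only [funext expand_inv]
  refine WithPiTopology.multipliable_one_add_of_tendsto_order_atTop_nhds_top R
    (tendsto_nhds_top_mono ENat.tendsto_natCast_nhds_top <| .of_forall fun i ↦ ?_)
  refine nat_le_order _ _ fun j hj ↦ X_pow_dvd_iff.mp (dvd_mul_right _ _) j (by omega)

lemma tendsto_qPoch_one : Tendsto (fun n ↦ (qPoch 1 n : R⟦X⟧)) atTop (𝓝 euler) := by
  simpa only [euler, qPoch, add_comm 1] using
    (WithPiTopology.multipliable_one_sub_X_pow R).hasProd.tendsto_prod_nat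

lemma tendsto_qFactInv : Tendsto (fun n ↦ (qFactInv n : R⟦X⟧)) atTop (𝓝 eulerInv) :=
  multipliable_invOfUnit_one_sub_X_pow.hasProd.tendsto_prod_nat

variable [T2Space R]

lemma euler_eq_pentagonalSeries : (euler : R⟦X⟧) = pentagonalSeries R :=
  WithPiTopology.tprod_one_sub_X_pow R

variable [IsTopologicalRing R]

lemma euler_mul_eulerInv : (euler * eulerInv : R⟦X⟧) = 1 := by
  refine tendsto_nhds_unique (tendsto_qPoch_one.mul tendsto_qFactInv) ?_
  simp only [qPoch_one_mul_qFactInv]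
  exact tendsto_const_nhds

end QPochhammer

/-! ### Partial theta functions and a finite Jacobi identity -/

section Triangular

/-- The triangular number `k * (k + 1) / 2` of an integer `k`. -/
def tri (k : ℤ) : ℕ := (k * (k + 1) / 2).toNat

lemma two_mul_tri (k : ℤ) : 2 * (tri k : ℤ) = k * (k + 1) := by
  rw [tri, Int.toNat_of_nonneg, Int.two_mul_ediv_two_of_even (Int.even_mul_succ_self k)]
  refine Int.ediv_nonneg ?_ zero_le_two
  rcases le_or_gt 0 k with hk | hk <;> nlinarith

lemma tri_zero : tri 0 = 0 := rfl

lemma tri_add_one (k : ℤ) : (tri (k + 1) : ℤ) = tri k + (k + 1) := by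
  linarith [two_mul_tri k, two_mul_tri (k + 1)]

lemma tri_natCast_add_one (n : ℕ) : tri (n + 1) = tri n + (n + 1) := by
  exact_mod_cast tri_add_one n

lemma tri_neg_add_one (k : ℤ) : tri (-(k + 1)) = tri k := by
  zify
  linarith [two_mul_tri k, two_mul_tri (-(k + 1))]

lemma natAbs_le_tri_add_one (k : ℤ) : k.natAbs ≤ tri k + 1 := by
  have := two_mul_tri k
  zify
  rcases abs_cases k with ⟨hk, _⟩ | ⟨hk, _⟩ <;> rw [hk] <;> nlinarith

lemma le_tri (n : ℕ) : n ≤ tri n := by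
  induction n with
  | zero => simp
  | succ n ih => push_cast; rw [tri_natCast_add_one]; omega

end Triangular

section PartialTheta

variable {R : Type*} [CommRing R] [TopologicalSpace R]

/-- The `q`-Bessel sum `∑ i, q ^ i / ((q; q)_i (q; q)_(i + c))`, with `q = X`. -/
def qBessel (c : ℕ) : R⟦X⟧ := ∑' i, X ^ i * (qFactInv i * qFactInv (i + c))

/-- The partial theta series `∑ j, (-1) ^ j q ^ (j (j + 1) / 2 + c j)`, with `q = X`. -/
def partialTheta (c : ℕ) : R⟦X⟧ := ∑' j : ℕ, (-1) ^ j * X ^ (tri j + c * j)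

lemma summable_qBessel (c : ℕ) :
    Summable fun i ↦ (X ^ i * (qFactInv i * qFactInv (i + c)) : R⟦X⟧) :=
  summable_nat_of_X_pow_dvd fun _ ↦ dvd_mul_right _ _

lemma summable_partialTheta (c : ℕ) :
    Summable fun j : ℕ ↦ ((-1) ^ j * X ^ (tri j + c * j) : R⟦X⟧) :=
  summable_nat_of_X_pow_dvd fun j ↦
    (pow_dvd_pow X ((le_tri j).trans (Nat.le_add_right _ _))).mul_left _

variable [IsTopologicalRing R] [T2Space R]

lemma qBessel_add_mul_succ (c : ℕ) :
    (qBessel c + X ^ (c + 1) * qBessel (c + 1) : R⟦X⟧) = eulerInv ^ 2 := by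
  have sum_range_eq (n : ℕ) : ∑ i ∈ range (n + 1),
      (X ^ i * (qFactInv i * qFactInv (i + c)) +
        X ^ (c + 1) * (X ^ i * (qFactInv i * qFactInv (i + (c + 1))))) =
      (qFactInv n * qFactInv (n + (c + 1)) : R⟦X⟧) := by
    induction n with
    | zero =>
      rw [sum_range_one, zero_add, qFactInv_eq_mul_succ c, qFactInv_zero, zero_add]
      ring
    | succ n ih =>
      rw [sum_range_succ, ih, qFactInv_eq_mul_succ n, add_right_comm n 1 c, add_right_comm n 1,
        add_assoc n, qFactInv_eq_mul_succ (n + (c + 1))]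
      ring
  have hsum := (summable_qBessel (R := R) c).hasSum.add
    ((summable_qBessel (R := R) (c + 1)).hasSum.mul_left (X ^ (c + 1)))
  refine tendsto_nhds_unique ((tendsto_add_atTop_iff_nat 1).mpr hsum.tendsto_sum_nat) ?_
  simp only [sum_range_eq, pow_two]
  exact tendsto_qFactInv.mul ((tendsto_add_atTop_iff_nat (c + 1)).mpr tendsto_qFactInv)

lemma partialTheta_add_mul_succ (c : ℕ) :
    (partialTheta c + X ^ (c + 1) * partialTheta (c + 1) : R⟦X⟧) = 1 := by
  have hsum := ((hasSum_nat_add_iff' 1).mpr (summable_partialTheta (R := R) c).hasSum).add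
    ((summable_partialTheta (R := R) (c + 1)).hasSum.mul_left (X ^ (c + 1)))
  have cancel (j : ℕ) : (-1) ^ (j + 1) * X ^ (tri (j + 1 : ℕ) + c * (j + 1)) +
      X ^ (c + 1) * ((-1) ^ j * X ^ (tri j + (c + 1) * j)) = (0 : R⟦X⟧) := by
    push_cast
    rw [tri_natCast_add_one]
    ring
  simp only [cancel, sum_range_one, Nat.cast_zero, tri_zero, mul_zero, pow_zero] at hsum
  rw [partialTheta, partialTheta]
  linear_combination hsum.unique hasSum_zero

lemma euler_sq_mul_qBessel (c : ℕ) :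
    (euler ^ 2 * qBessel c : R⟦X⟧) = partialTheta c := by
  refine eq_of_forall_X_pow_dvd_sub fun n ↦ ?_
  induction n generalizing c with
  | zero => simp
  | succ n ih =>
    have step : (euler ^ 2 * qBessel c - partialTheta c : R⟦X⟧) =
        X * (-X ^ c * (euler ^ 2 * qBessel (c + 1) - partialTheta (c + 1))) := by
      linear_combination euler ^ 2 * qBessel_add_mul_succ (R := R) c -
        partialTheta_add_mul_succ (R := R) c +
        (euler * eulerInv + 1) * euler_mul_eulerInv (R := R)
    rw [step, pow_succ']
    exact mul_dvd_mul_left _ ((ih _).mul_left _)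

end PartialTheta

section FiniteJacobi

variable {R : Type*} [CommRing R]

/-- The reciprocal `1 / (q; q)_(m - s)`, taken to be `0` when `m < s`. -/
def qFactInvSub (m s : ℕ) : R⟦X⟧ := if s ≤ m then qFactInv (m - s) else 0

lemma qFactInvSub_of_lt {m s : ℕ} (h : m < s) : (qFactInvSub m s : R⟦X⟧) = 0 :=
  if_neg (by omega)

lemma qFactInvSub_add (i s : ℕ) : (qFactInvSub (i + s) s : R⟦X⟧) = qFactInv i := by
  simp [qFactInvSub]

lemma qFactInvSub_succ_right (m s : ℕ) :
    (qFactInvSub m (s + 1) : R⟦X⟧) = (1 - X ^ (m - s)) * qFactInvSub m s := by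
  rcases lt_or_ge m s with h | h
  · rw [qFactInvSub_of_lt h, qFactInvSub_of_lt (by omega), mul_zero]
  obtain ⟨_ | i, rfl⟩ := Nat.exists_eq_add_of_le' h
  · simp [qFactInvSub_of_lt]
  · rw [qFactInvSub_add, Nat.add_sub_cancel, add_right_comm, add_assoc, qFactInvSub_add,
      qFactInv_eq_mul_succ]

lemma qFactInvSub_succ_succ (m s : ℕ) :
    (qFactInvSub (m + 1) (s + 1) : R⟦X⟧) = qFactInvSub m s := by
  simp [qFactInvSub]

/-- The `s`-th term, without its weight `2 * s + 1`, of the finite form of Jacobi's identity for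
the cube of Euler's product. -/
def jacobiTerm (m s : ℕ) : R⟦X⟧ :=
  (-1) ^ s * X ^ tri s * (qFactInvSub m s * qFactInv (m + s + 1))

lemma jacobiTerm_of_lt {m s : ℕ} (h : m < s) : (jacobiTerm m s : R⟦X⟧) = 0 := by
  simp [jacobiTerm, qFactInvSub_of_lt h]

lemma X_pow_dvd_jacobiTerm (m s : ℕ) : X ^ s ∣ (jacobiTerm m s : R⟦X⟧) :=
  ((pow_dvd_pow X (le_tri s)).mul_left _).mul_right _

lemma jacobiTerm_succ_succ (m s : ℕ) :
    ((1 - X ^ (2 * m + 2)) * (1 - X ^ (2 * m + 3)) * jacobiTerm (m + 1) (s + 1) : R⟦X⟧) =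
      (1 + X ^ (2 * m + 2)) * jacobiTerm m (s + 1) -
        X ^ (m + 1) * (jacobiTerm m s + jacobiTerm m (s + 2)) := by
  simp only [jacobiTerm]
  rw [qFactInvSub_succ_succ, qFactInvSub_succ_right m (s + 1), qFactInvSub_succ_right m s,
    qFactInv_eq_mul_succ (m + s + 1), qFactInv_eq_mul_succ (m + (s + 1) + 1),
    show m + 1 + (s + 1) + 1 = m + s + 3 by ring, show m + (s + 1) + 1 = m + s + 2 by ring,
    qFactInv_eq_mul_succ (m + s + 2), show m + (s + 2) + 1 = m + s + 3 by ring]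
  have tri_succ : tri (s + 1 : ℕ) = tri s + (s + 1) := tri_natCast_add_one s
  have tri_add_two : tri (s + 2 : ℕ) = tri s + (s + 1) + (s + 2) := by
    rw [← tri_succ]
    exact tri_natCast_add_one (s + 1)
  rw [tri_succ, tri_add_two]
  rcases lt_or_ge m s with h | h
  · simp [qFactInvSub_of_lt h]
  obtain ⟨_ | k, rfl⟩ := Nat.exists_eq_add_of_le h
  · simp only [Nat.sub_self, pow_zero]
    ring
  · rw [Nat.add_sub_cancel_left, show s + (k + 1) - (s + 1) = k by omega]
    ring

lemma jacobiTerm_succ_zero (m : ℕ) :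
    ((1 - X ^ (2 * m + 2)) * (1 - X ^ (2 * m + 3)) * jacobiTerm (m + 1) 0 : R⟦X⟧) =
      (1 + X ^ (2 * m + 2)) * jacobiTerm m 0 -
        X ^ (m + 1) * (-jacobiTerm m 0 + jacobiTerm m 1) := by
  simp only [jacobiTerm]
  rw [qFactInvSub_succ_right m 0, qFactInv_eq_mul_succ (m + 0 + 1)]
  simp only [qFactInvSub, Nat.zero_le, if_true, Nat.sub_zero, Nat.cast_zero, Nat.cast_one,
    tri_zero, show tri 1 = 1 from rfl, add_zero]
  rw [qFactInv_eq_mul_succ m, qFactInv_eq_mul_succ (m + 1)]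
  ring

lemma sum_range_weight_mul_add {A : Type*} [CommRing A] (b : ℕ → A) (N : ℕ) :
    (-b 0 + b 1) + ∑ s ∈ range N, (2 * ((s + 1 : ℕ) : A) + 1) * (b s + b (s + 2)) =
      2 * ∑ s ∈ range (N + 1), (2 * (s : A) + 1) * b s + (2 * N + 1) * b (N + 1) -
        (2 * N + 3) * b N := by
  induction N with
  | zero => simp; ring
  | succ N ih =>
    rw [sum_range_succ, ← add_assoc, ih, sum_range_succ _ (N + 1)]
    push_cast
    ring

lemma sum_jacobiTerm_succ (m : ℕ) :
    ((1 - X ^ (2 * m + 2)) * (1 - X ^ (2 * m + 3)) *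
      ∑ s ∈ range (m + 2), (2 * (s : R⟦X⟧) + 1) * jacobiTerm (m + 1) s) =
      (1 - X ^ (m + 1)) ^ 2 * ∑ s ∈ range (m + 1), (2 * (s : R⟦X⟧) + 1) * jacobiTerm m s := by
  have weight := sum_range_weight_mul_add (jacobiTerm (R := R) m) (m + 1)
  have shift := sum_range_succ' (fun s ↦ (2 * (s : R⟦X⟧) + 1) * jacobiTerm m s) (m + 1)
  rw [sum_range_succ] at shift
  rw [sum_range_succ _ (m + 1)] at weight
  simp only [jacobiTerm_of_lt (R := R) (show m < m + 1 by omega),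
    jacobiTerm_of_lt (R := R) (show m < m + 1 + 1 by omega)] at weight shift
  have term_succ (s : ℕ) : (1 - X ^ (2 * m + 2)) * (1 - X ^ (2 * m + 3)) *
      ((2 * ((s + 1 : ℕ) : R⟦X⟧) + 1) * jacobiTerm (m + 1) (s + 1)) =
      (1 + X ^ (2 * m + 2)) * ((2 * ((s + 1 : ℕ) : R⟦X⟧) + 1) * jacobiTerm m (s + 1)) -
        X ^ (m + 1) *
          ((2 * ((s + 1 : ℕ) : R⟦X⟧) + 1) * (jacobiTerm m s + jacobiTerm m (s + 2))) := by
    linear_combination (2 * ((s + 1 : ℕ) : R⟦X⟧) + 1) * jacobiTerm_succ_succ (R := R) m s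
  rw [sum_range_succ', mul_add, mul_sum, sum_congr rfl fun s _ ↦ term_succ s, sum_sub_distrib,
    ← mul_sum, ← mul_sum]
  simp only [Nat.cast_zero, mul_zero, zero_add, one_mul, add_zero, sub_zero] at weight shift ⊢
  linear_combination jacobiTerm_succ_zero (R := R) m - (1 + X ^ (2 * m + 2)) * shift -
    X ^ (m + 1) * weight

/-- A finite form of Jacobi's identity: letting `m → ∞` gives `euler_pow_three`. -/
theorem sum_jacobiTerm (m : ℕ) :
    ∑ s ∈ range (m + 1), (2 * (s : R⟦X⟧) + 1) * jacobiTerm m s =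
      qPoch 1 m ^ 2 * qFactInv (2 * m + 1) := by
  induction m with
  | zero => simp [jacobiTerm, tri_zero, qFactInvSub]
  | succ m ih =>
    have key := sum_jacobiTerm_succ (R := R) m
    rw [ih, qFactInv_eq_mul_succ (2 * m + 1), qFactInv_eq_mul_succ (2 * m + 1 + 1)] at key
    refine ((isUnit_one_sub_X_pow (R := R) (n := 2 * m + 2) (by omega)).mul
      (isUnit_one_sub_X_pow (n := 2 * m + 3) (by omega))).mul_left_cancel (key.trans ?_)
    rw [qPoch_succ, show 2 * (m + 1) + 1 = 2 * m + 1 + 1 + 1 by ring]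
    ring

variable [TopologicalSpace R]

lemma tendsto_qFactInvSub (s : ℕ) :
    Tendsto (fun m ↦ (qFactInvSub m s : R⟦X⟧)) atTop (𝓝 eulerInv) := by
  rw [← tendsto_add_atTop_iff_nat s]
  simpa only [qFactInvSub_add] using tendsto_qFactInv

lemma tsum_jacobiTerm (m : ℕ) :
    ∑' s : ℕ, (2 * (s : R⟦X⟧) + 1) * jacobiTerm m s =
      qPoch 1 m ^ 2 * qFactInv (2 * m + 1) := by
  rw [← sum_jacobiTerm]
  refine tsum_eq_sum fun s hs ↦ ?_
  rw [jacobiTerm_of_lt (by simpa [Nat.lt_succ_iff] using hs), mul_zero]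

variable [IsTopologicalRing R] [T2Space R]

theorem euler_pow_three :
    (euler ^ 3 : R⟦X⟧) = ∑' s : ℕ, (2 * (s : R⟦X⟧) + 1) * ((-1) ^ s * X ^ tri s) := by
  have hdvd (s : ℕ) : X ^ s ∣ (-1) ^ s * (X ^ tri s : R⟦X⟧) :=
    (pow_dvd_pow X (le_tri s)).mul_left _
  have lim_left : Tendsto (fun m ↦ ∑' s : ℕ, (2 * (s : R⟦X⟧) + 1) * jacobiTerm m s) atTop
      (𝓝 (∑' s : ℕ, (2 * (s : R⟦X⟧) + 1) * ((-1) ^ s * X ^ tri s * (eulerInv * eulerInv)))) := by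
    refine tendsto_tsum_of_X_pow_dvd (fun m s ↦ (X_pow_dvd_jacobiTerm m s).mul_left _)
      (fun s ↦ ((hdvd s).mul_right _).mul_left _) fun s ↦ ?_
    have : Tendsto (fun m ↦ (qFactInv (m + s + 1) : R⟦X⟧)) atTop (𝓝 eulerInv) :=
      (tendsto_add_atTop_iff_nat (s + 1)).mpr tendsto_qFactInv
    exact (((tendsto_qFactInvSub s).mul this).const_mul _).const_mul _
  have lim_right : Tendsto (fun m ↦ (qPoch 1 m ^ 2 * qFactInv (2 * m + 1) : R⟦X⟧)) atTop
      (𝓝 (euler ^ 2 * eulerInv)) :=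
    (tendsto_qPoch_one.pow 2).mul (tendsto_qFactInv.comp
      (tendsto_atTop_mono (fun m ↦ show m ≤ 2 * m + 1 by omega) tendsto_id))
  simp only [tsum_jacobiTerm] at lim_left
  have hsum : Summable fun s : ℕ ↦ (2 * (s : R⟦X⟧) + 1) * ((-1) ^ s * X ^ tri s) :=
    summable_nat_of_X_pow_dvd fun s ↦ (hdvd s).mul_left _
  have key := tendsto_nhds_unique lim_left lim_right
  simp only [← mul_assoc _ _ (eulerInv * eulerInv)] at key
  rw [hsum.tsum_mul_right] at key
  linear_combination -euler ^ 2 * key + (-euler ^ 3 + (euler * eulerInv + 1) *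
    ∑' s : ℕ, (2 * (s : R⟦X⟧) + 1) * ((-1) ^ s * X ^ tri s)) * euler_mul_eulerInv (R := R)

end FiniteJacobi

/-! ### The numerator as a false theta series -/

section Numerator

variable {R : Type*} [CommRing R] [TopologicalSpace R]

/-- The series `∑ m, q ^ (m + 1) (q; q)_m ^ 2 / (q; q)_(2 m + 1)`, with `q = X`; its quotient by
Euler's product is the generating function of `sT`. -/
def stNumer : R⟦X⟧ := ∑' m, X ^ (m + 1) * (qPoch 1 m ^ 2 * qFactInv (2 * m + 1))

/-- The moment `∑ k, q ^ ((a + 1) k) (q ^ (k + 1); q)_m` of a `q`-shifted factorial, with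
`q = X`. -/
def qPochMoment (a m : ℕ) : R⟦X⟧ := ∑' k, X ^ (k * (a + 1)) * qPoch (k + 1) m

/-- The contribution `∑ m, q ^ ((r + 1) (m + 1)) (q ^ (r + 1); q)_m` of the `r`-th terms of the
moments `qPochMoment m m` to `stNumer`. -/
def numerSlice (r : ℕ) : R⟦X⟧ := ∑' m, X ^ ((r + 1) * (m + 1)) * qPoch (r + 1) m

/-- The binomial `q ^ k + q ^ (2 k)`, with `q = X`. -/
def powPair (k : ℕ) : R⟦X⟧ := X ^ k + X ^ (2 * k)

/-- The alternating sum `1 - q ^ (n - 1) + q ^ ((n - 1) + (n - 2)) - ⋯` of `n` terms, with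
`q = X`. -/
def falseTheta : ℕ → R⟦X⟧
  | 0 => 0
  | n + 1 => 1 - X ^ n * falseTheta n

lemma summable_qPochMoment (a m : ℕ) :
    Summable fun k ↦ (X ^ (k * (a + 1)) * qPoch (k + 1) m : R⟦X⟧) :=
  summable_nat_of_X_pow_dvd fun _ ↦ (pow_dvd_pow X (by nlinarith)).mul_right _

lemma summable_numerSlice (r : ℕ) :
    Summable fun m ↦ (X ^ ((r + 1) * (m + 1)) * qPoch (r + 1) m : R⟦X⟧) :=
  summable_nat_of_X_pow_dvd fun _ ↦ (pow_dvd_pow X (by nlinarith)).mul_right _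

variable [T2Space R]

lemma X_pow_dvd_numerSlice (r : ℕ) : X ^ r ∣ (numerSlice r : R⟦X⟧) :=
  X_pow_dvd_tsum fun _ ↦ (pow_dvd_pow X (by nlinarith)).mul_right _

variable [IsTopologicalRing R]

lemma qPochMoment_succ (a m : ℕ) :
    (qPochMoment a (m + 1) : R⟦X⟧) =
      qPochMoment a m - X ^ (m + 1) * qPochMoment (a + 1) m := by
  have hsum := summable_qPochMoment (R := R)
  rw [qPochMoment, qPochMoment, qPochMoment, ← (hsum (a + 1) m).tsum_mul_left,
    ← (hsum a m).tsum_sub ((hsum (a + 1) m).mul_left _)]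
  refine tsum_congr fun k ↦ ?_
  rw [qPoch_succ]
  ring

lemma qPochMoment_mul_qPoch (a m : ℕ) :
    (qPochMoment a m * qPoch (a + 1) (m + 1) : R⟦X⟧) = qPoch 1 m := by
  induction m generalizing a with
  | zero =>
    have geom := WithPiTopology.tsum_pow_mul_one_sub_of_constantCoeff_eq_zero
      (f := (X ^ (a + 1) : R⟦X⟧)) (by simp)
    simpa only [qPochMoment, qPoch_succ, qPoch_zero, ← pow_mul', mul_one, one_mul, add_zero]
      using geom
  | succ m ih =>
    have split_last := qPoch_succ (R := R) (a + 1) (m + 1)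
    have split_first := qPoch_succ' (R := R) (a + 1) (m + 1)
    rw [qPochMoment_succ, qPoch_succ 1 m]
    linear_combination (1 - X ^ (a + 1 + (m + 1))) * ih a -
      X ^ (m + 1) * (1 - X ^ (a + 1)) * ih (a + 1) + qPochMoment a m * split_last -
      X ^ (m + 1) * qPochMoment (a + 1) m * split_first

lemma qPochMoment_self (m : ℕ) :
    (qPochMoment m m : R⟦X⟧) = qPoch 1 m ^ 2 * qFactInv (2 * m + 1) := by
  have moment := qPochMoment_mul_qPoch (R := R) m m
  have split := qPoch_one_add (R := R) m (m + 1)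
  have inv := qPoch_one_mul_qFactInv (R := R) (2 * m + 1)
  rw [show 2 * m + 1 = m + (m + 1) by ring] at *
  linear_combination -qPochMoment m m * inv + qPoch 1 m * qFactInv (m + (m + 1)) * moment +
    qPochMoment m m * qFactInv (m + (m + 1)) * split

lemma stNumer_eq_tsum_numerSlice : (stNumer : R⟦X⟧) = ∑' r, numerSlice r := by
  simp only [stNumer, numerSlice]
  rw [← tsum_comm_of_X_pow_dvd (R := R) fun m r ↦ (pow_dvd_pow X (max_le (by nlinarith)
    (by nlinarith))).mul_right _]
  refine tsum_congr fun m ↦ ?_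
  rw [← qPochMoment_self, qPochMoment, ← (summable_qPochMoment (R := R) m m).tsum_mul_left]
  refine tsum_congr fun r ↦ ?_
  ring

lemma numerSlice_eq (r : ℕ) :
    (numerSlice r : R⟦X⟧) = powPair (r + 1) - X ^ (3 * (r + 1)) * numerSlice (r + 1) := by
  set y : R⟦X⟧ := X ^ (r + 1) with hy
  have hdvd (m : ℕ) : X ^ m ∣ y ^ m := by
    rw [hy, ← pow_mul]
    exact pow_dvd_pow X (by nlinarith)
  have hsum : Summable fun m ↦ y ^ m * qPoch (r + 2) m :=
    summable_nat_of_X_pow_dvd fun m ↦ (hdvd m).mul_right _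
  have hsum_succ : Summable fun m ↦ y ^ m * qPoch (r + 2) (m + 1) :=
    summable_nat_of_X_pow_dvd fun m ↦ (hdvd m).mul_right _
  have shift : ∑' m, y ^ m * qPoch (r + 2) m =
      1 + y * ∑' m, y ^ m * qPoch (r + 2) (m + 1) := by
    rw [hsum.tsum_eq_zero_add, ← hsum_succ.tsum_mul_left]
    simp only [qPoch_zero, pow_zero, mul_one, pow_succ', mul_assoc]
  have slice_succ : numerSlice (r + 1) =
      ∑' m, y ^ m * qPoch (r + 2) m - ∑' m, y ^ m * qPoch (r + 2) (m + 1) := by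
    rw [numerSlice, ← hsum.tsum_sub hsum_succ]
    refine tsum_congr fun m ↦ ?_
    rw [qPoch_succ, hy]
    ring
  have slice : numerSlice r = y + (1 - y) * y ^ 2 * ∑' m, y ^ m * qPoch (r + 2) m := by
    rw [numerSlice, (summable_numerSlice (R := R) r).tsum_eq_zero_add, ← hsum.tsum_mul_left]
    simp only [qPoch_zero, zero_add, mul_one]
    congr 1
    refine tsum_congr fun m ↦ ?_
    rw [qPoch_succ', hy]
    ring
  rw [slice, slice_succ, shift, powPair, mul_comm 2, pow_mul, mul_comm 3, pow_mul, ← hy]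
  ring

theorem stNumer_eq_tsum_falseTheta :
    (stNumer : R⟦X⟧) = ∑' k, φ (falseTheta (k + 1)) * powPair (k + 1) := by
  have hdvd (k : ℕ) : X ^ k ∣ (numerSlice k : R⟦X⟧) := X_pow_dvd_numerSlice k
  have hsum : Summable fun k ↦ φ (falseTheta (k + 1)) * (numerSlice k : R⟦X⟧) :=
    summable_nat_of_X_pow_dvd fun k ↦ (hdvd k).mul_left _
  have hsum_shift : Summable fun k ↦ φ (falseTheta k) * (X ^ (3 * k) * numerSlice k : R⟦X⟧) :=
    summable_nat_of_X_pow_dvd fun k ↦ ((hdvd k).mul_left _).mul_left _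
  have shift : ∑' k, φ (falseTheta k) * (X ^ (3 * k) * numerSlice k : R⟦X⟧) =
      ∑' k, φ (falseTheta (k + 1)) * (X ^ (3 * (k + 1)) * numerSlice (k + 1)) := by
    rw [hsum_shift.tsum_eq_zero_add]
    simp [falseTheta]
  have powPair_eq (k : ℕ) : φ (falseTheta (k + 1)) * powPair (k + 1) =
      φ (falseTheta (k + 1)) * (numerSlice k : R⟦X⟧) +
        φ (falseTheta (k + 1)) * (X ^ (3 * (k + 1)) * numerSlice (k + 1)) := by
    linear_combination -φ (falseTheta (k + 1)) * numerSlice_eq (R := R) k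
  rw [tsum_congr powPair_eq, hsum.tsum_add ((summable_nat_add_iff 1).mpr hsum_shift), ← shift,
    ← hsum.tsum_add hsum_shift, stNumer_eq_tsum_numerSlice]
  refine tsum_congr fun k ↦ ?_
  rw [falseTheta, map_sub, map_mul, map_pow, expand_X, map_one]
  ring

lemma tsum_X_pow_mul_jacobiTerm (s : ℕ) :
    (euler ^ 2 * ∑' m, X ^ (m + 1) * jacobiTerm m s : R⟦X⟧) =
      (-1) ^ s * X ^ (tri s + s + 1) * partialTheta (2 * s + 1) := by
  have hsum : Summable fun m ↦ (X ^ (m + 1) * jacobiTerm m s : R⟦X⟧) :=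
    summable_nat_of_X_pow_dvd fun m ↦ (pow_dvd_pow X m.le_succ).mul_right _
  rw [← hsum.sum_add_tsum_nat_add s, sum_eq_zero fun m hm ↦ by
    rw [jacobiTerm_of_lt (mem_range.mp hm), mul_zero], zero_add,
    ← euler_sq_mul_qBessel, qBessel, mul_left_comm _ (euler ^ 2),
    ← (summable_qBessel (R := R) (2 * s + 1)).tsum_mul_left]
  congr 1
  refine tsum_congr fun i ↦ ?_
  rw [jacobiTerm, qFactInvSub_add, show i + s + s + 1 = i + (2 * s + 1) by ring]
  ring

theorem stNumer_mul_euler_sq : (stNumer * euler ^ 2 : R⟦X⟧) =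
    ∑' s : ℕ, (2 * (s : R⟦X⟧) + 1) *
      ((-1) ^ s * X ^ (tri s + s + 1) * partialTheta (2 * s + 1)) := by
  have hdvd (m s : ℕ) : X ^ max m s ∣
      (X ^ (m + 1) * ((2 * (s : R⟦X⟧) + 1) * jacobiTerm m s) : R⟦X⟧) := by
    have : X ^ (m + 1 + s) ∣ (X ^ (m + 1) * ((2 * (s : R⟦X⟧) + 1) * jacobiTerm m s) : R⟦X⟧) := by
      rw [pow_add]
      exact mul_dvd_mul_left _ ((X_pow_dvd_jacobiTerm m s).mul_left _)
    exact (pow_dvd_pow X (max_le (by omega) (by omega))).trans this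
  have hsum (m : ℕ) : Summable fun s : ℕ ↦ (2 * (s : R⟦X⟧) + 1) * jacobiTerm m s :=
    summable_nat_of_X_pow_dvd fun s ↦ (X_pow_dvd_jacobiTerm m s).mul_left _
  have hsum_col (s : ℕ) : Summable fun m ↦ (X ^ (m + 1) * jacobiTerm m s : R⟦X⟧) :=
    summable_nat_of_X_pow_dvd fun m ↦ (pow_dvd_pow X m.le_succ).mul_right _
  have hsum_tot : Summable fun s : ℕ ↦
      ∑' m, (X ^ (m + 1) * ((2 * (s : R⟦X⟧) + 1) * jacobiTerm m s) : R⟦X⟧) :=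
    summable_nat_of_X_pow_dvd fun s ↦ X_pow_dvd_tsum fun m ↦
      (pow_dvd_pow X (le_max_right m s)).trans (hdvd m s)
  simp only [stNumer, ← tsum_jacobiTerm, ← (hsum _).tsum_mul_left]
  rw [tsum_comm_of_X_pow_dvd hdvd, mul_comm, ← hsum_tot.tsum_mul_left]
  refine tsum_congr fun s ↦ ?_
  simp only [mul_left_comm (X ^ (_ + 1)) (2 * (s : R⟦X⟧) + 1)]
  rw [(hsum_col s).tsum_mul_left, ← tsum_X_pow_mul_jacobiTerm]
  ring

end Numerator

/-! ### Lambert series -/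

section Lambert

lemma intCast_negOnePow_natCast {A : Type*} [Ring A] (n : ℕ) :
    (Int.negOnePow n : A) = (-1) ^ n := by
  simp

variable {R : Type*} [CommRing R]

/-- The Lambert term `b / (1 - q ^ b)`, with `q = X`; it is `0` for `b = 0`. -/
def lambertTerm (b : ℕ) : R⟦X⟧ := (b : R⟦X⟧) * invOfUnit (1 - X ^ b) 1

/-- The pair of exponents `k (k - 1) / 2 - b (k - 1) + b (b - 1) / 2` and its reflection under
`b ↦ -b`, shifted by `b`, which the Lambert term of index `b` contributes at level `k`. -/
def reflPair (k b : ℕ) : R⟦X⟧ := X ^ tri (k - 1 - b) + X ^ (tri (k - 1 + b) + b)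

lemma one_sub_X_pow_mul_lambertTerm (b : ℕ) :
    ((1 - X ^ b) * lambertTerm b : R⟦X⟧) = b := by
  obtain rfl | hb := eq_or_ne b 0
  · simp [lambertTerm]
  · rw [lambertTerm]
    linear_combination (b : R⟦X⟧) * one_sub_X_pow_mul_invOfUnit (R := R) hb

lemma X_pow_dvd_powPair (k : ℕ) : X ^ k ∣ (powPair k : R⟦X⟧) :=
  dvd_add dvd_rfl (pow_dvd_pow X (by omega))

lemma X_pow_dvd_reflPair (k b : ℕ) : X ^ (b - k) ∣ (reflPair k b : R⟦X⟧) := by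
  have := natAbs_le_tri_add_one (k - 1 - b)
  exact dvd_add (pow_dvd_pow X (by omega)) (pow_dvd_pow X (by omega))

lemma reflPair_zero (b : ℕ) : (reflPair 0 b : R⟦X⟧) = 2 * X ^ tri b := by
  have reflect : tri ((0 : ℕ) - 1 - b) = tri b := by
    rw [← tri_neg_add_one b]
    congr 1
    push_cast
    ring
  have shift : tri ((0 : ℕ) - 1 + b) + b = tri b := by
    rw [Nat.cast_zero, zero_sub]
    zify
    linarith [two_mul_tri (-1 + b), two_mul_tri b]
  rw [reflPair, reflect, shift, two_mul]

lemma reflPair_succ_sub (k b : ℕ) :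
    (reflPair (k + 1) b - X ^ k * reflPair k b : R⟦X⟧) =
      (1 - X ^ b) * (X ^ tri (k - b) - X ^ tri (k + b)) := by
  have lower : k + tri (k - 1 - b) = tri (k - b) + b := by
    zify
    linarith [two_mul_tri (k - 1 - b), two_mul_tri (k - b)]
  have upper : k + (tri (k - 1 + b) + b) = tri (k + b) := by
    zify
    linarith [two_mul_tri (k - 1 + b), two_mul_tri (k + b)]
  have expand_refl : (X ^ k * reflPair k b : R⟦X⟧) = X ^ (tri (k - b) + b) + X ^ tri (k + b) := by
    rw [reflPair, mul_add, ← pow_add, ← pow_add, lower, upper]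
  rw [expand_refl, reflPair, Nat.cast_add_one, add_sub_cancel_right, pow_add, pow_add]
  ring

variable [TopologicalSpace R]

/-- The Lambert series `∑ b, b q ^ b / (1 - q ^ b)`, the generating function of the sum of
divisors, with `q = X`. -/
def lambert : R⟦X⟧ := ∑' b, lambertTerm b * X ^ b

/-- The Lambert series `-2 ∑ b, (-1) ^ b b q ^ (b (b + 1) / 2) / (1 - q ^ b)`, with `q = X`. -/
def lambertTheta : R⟦X⟧ := -2 * ∑' b : ℕ, (-1) ^ b * lambertTerm b * X ^ tri b

/-- The multiple `(-1) ^ k (q; q)_∞ ^ 3` of `falseTheta k`, as a sum of Lambert terms. -/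
def lambertLevel (k : ℕ) : R⟦X⟧ :=
  X ^ tri (k - 1) * lambertTheta + ∑' b : ℕ, (-1) ^ b * lambertTerm b * reflPair k b

lemma summable_lambert : Summable fun b ↦ (lambertTerm b * X ^ b : R⟦X⟧) :=
  summable_nat_of_X_pow_dvd fun _ ↦ dvd_mul_left _ _

lemma summable_lambertTheta :
    Summable fun b : ℕ ↦ ((-1) ^ b * lambertTerm b * X ^ tri b : R⟦X⟧) :=
  summable_nat_of_X_pow_dvd fun b ↦ (pow_dvd_pow X (le_tri b)).mul_left _

lemma summable_lambertLevel (k : ℕ) :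
    Summable fun b : ℕ ↦ ((-1) ^ b * lambertTerm b * reflPair k b : R⟦X⟧) :=
  summable_of_X_pow_dvd (Nat.cofinite_eq_atTop ▸ tendsto_sub_atTop_nat k)
    fun b ↦ (X_pow_dvd_reflPair k b).mul_left _

variable [T2Space R]

lemma hasSum_negOnePow_mul_X_pow_tri :
    HasSum (fun c : ℤ ↦ (Int.negOnePow c : R⟦X⟧) * X ^ tri c) 0 := by
  have hsum : Summable fun c : ℤ ↦ (Int.negOnePow c : R⟦X⟧) * X ^ tri c :=
    summable_of_X_pow_dvd (tendsto_cofinite_atTop_of_natAbs_le natAbs_le_tri_add_one)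
      fun c ↦ dvd_mul_left _ _
  have cancel (n : ℕ) : (Int.negOnePow n : R⟦X⟧) * X ^ tri n +
      (Int.negOnePow (-(n + 1)) : R⟦X⟧) * X ^ tri (-(n + 1)) = 0 := by
    rw [tri_neg_add_one, Int.negOnePow_neg, Int.negOnePow_succ]
    push_cast
    ring
  have := hsum.hasSum.nat_add_neg_add_one
  simp only [cancel] at this
  exact this.unique hasSum_zero ▸ hsum.hasSum

variable [IsTopologicalRing R]

lemma hasSum_negOnePow_mul_self_mul_X_pow_tri :
    HasSum (fun c : ℤ ↦ (Int.negOnePow c : R⟦X⟧) * (c : R⟦X⟧) * X ^ tri c) (euler ^ 3) := by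
  have hsum : Summable fun c : ℤ ↦ (Int.negOnePow c : R⟦X⟧) * (c : R⟦X⟧) * X ^ tri c :=
    summable_of_X_pow_dvd (tendsto_cofinite_atTop_of_natAbs_le natAbs_le_tri_add_one)
      fun c ↦ dvd_mul_left _ _
  have fold (n : ℕ) : (Int.negOnePow n : R⟦X⟧) * ((n : ℤ) : R⟦X⟧) * X ^ tri n +
      (Int.negOnePow (-(n + 1)) : R⟦X⟧) * ((-(n + 1) : ℤ) : R⟦X⟧) * X ^ tri (-(n + 1)) =
      (2 * (n : R⟦X⟧) + 1) * ((-1) ^ n * X ^ tri n) := by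
    rw [tri_neg_add_one, Int.negOnePow_neg, Int.negOnePow_succ, ← intCast_negOnePow_natCast]
    push_cast
    ring
  have := hsum.hasSum.nat_add_neg_add_one
  simp only [fold] at this
  rw [euler_pow_three, this.tsum_eq]
  exact hsum.hasSum

lemma hasSum_mul_X_pow_tri_sub (k : ℕ) :
    HasSum (fun b : ℕ ↦ (-1) ^ b * (b : R⟦X⟧) * (X ^ tri (k - b) - X ^ tri (k + b)))
      (-((-1) ^ k * euler ^ 3)) := by
  have bilateral : HasSum (fun b : ℤ ↦ (Int.negOnePow b : R⟦X⟧) * (b : R⟦X⟧) * X ^ tri (k - b))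
      (-((-1) ^ k * euler ^ 3)) := by
    rw [← (Equiv.subLeft (k : ℤ)).hasSum_iff]
    have := ((hasSum_negOnePow_mul_X_pow_tri (R := R)).mul_left ((-1) ^ k * (k : R⟦X⟧))).sub
      ((hasSum_negOnePow_mul_self_mul_X_pow_tri (R := R)).mul_left ((-1) ^ k))
    rw [mul_zero, zero_sub] at this
    refine this.congr_fun fun c ↦ ?_
    simp only [Function.comp, Equiv.subLeft_apply, sub_sub_cancel, Int.negOnePow_sub,
      ← intCast_negOnePow_natCast (A := R⟦X⟧) k]
    push_cast
    ring
  have := bilateral.nat_add_neg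
  rw [Int.cast_zero, mul_zero, zero_mul, add_zero] at this
  refine this.congr_fun fun b ↦ ?_
  rw [Int.negOnePow_neg, sub_neg_eq_add, ← intCast_negOnePow_natCast]
  push_cast
  ring

lemma lambertLevel_zero : (lambertLevel 0 : R⟦X⟧) = 0 := by
  have fold (b : ℕ) : ((-1) ^ b * lambertTerm b * reflPair 0 b : R⟦X⟧) =
      2 * ((-1) ^ b * lambertTerm b * X ^ tri b) := by
    rw [reflPair_zero]
    ring
  rw [lambertLevel, lambertTheta, tsum_congr fold,
    (summable_lambertTheta (R := R)).tsum_mul_left,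
    show tri ((0 : ℕ) - 1) = 0 from rfl]
  ring

lemma lambertLevel_succ (k : ℕ) :
    (lambertLevel (k + 1) : R⟦X⟧) = X ^ k * lambertLevel k - (-1) ^ k * euler ^ 3 := by
  have tri_eq : tri ((k + 1 : ℕ) - 1) = k + tri (k - 1) := by
    zify
    have := tri_add_one (k - 1)
    simp only [sub_add_cancel, add_sub_cancel_right] at this ⊢
    linarith
  have key := ((summable_lambertLevel (R := R) (k + 1)).hasSum.sub
    ((summable_lambertLevel (R := R) k).hasSum.mul_left (X ^ k))).unique <|
    (hasSum_mul_X_pow_tri_sub (R := R) k).congr_fun fun b ↦ by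
      linear_combination (-1) ^ b * lambertTerm b * reflPair_succ_sub (R := R) k b +
        (-1) ^ b * (X ^ tri (k - b) - X ^ tri (k + b)) * one_sub_X_pow_mul_lambertTerm (R := R) b
  rw [lambertLevel, lambertLevel, tri_eq]
  linear_combination key

lemma neg_one_pow_mul_lambertLevel (k : ℕ) :
    ((-1) ^ k * lambertLevel k : R⟦X⟧) = euler ^ 3 * falseTheta k := by
  induction k with
  | zero => simp [lambertLevel_zero, falseTheta]
  | succ k ih =>
    have sign : ((-1) ^ k * (-1) ^ k : R⟦X⟧) = 1 := by rw [← mul_pow]; simp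
    rw [lambertLevel_succ, falseTheta]
    linear_combination -X ^ k * ih + euler ^ 3 * sign

end Lambert

section LambertExpansion

variable {R : Type*} [CommRing R]

lemma expand_X_pow (n : ℕ) : φ (X ^ n : R⟦X⟧) = X ^ (3 * n) := by
  rw [map_pow, expand_X, ← pow_mul]

/-- The double family whose two iterated sums give `stNumer_mul_expand_euler_pow_three`. -/
def lambertDouble (b n : ℕ) : R⟦X⟧ :=
  (-1) ^ n * φ ((-1) ^ b * lambertTerm b * reflPair n b) * powPair n

lemma X_pow_dvd_lambertDouble (b n : ℕ) : X ^ max b n ∣ (lambertDouble b n : R⟦X⟧) := by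
  have lower : X ^ max b n ∣ (X ^ (3 * tri (n - 1 - b)) * powPair n : R⟦X⟧) := by
    have := natAbs_le_tri_add_one (n - 1 - b)
    refine (pow_dvd_pow X (?_ : _ ≤ 3 * tri (n - 1 - b) + n)).trans ?_
    · omega
    · exact pow_add (X : R⟦X⟧) _ _ ▸ mul_dvd_mul_left _ (X_pow_dvd_powPair n)
  have upper : X ^ max b n ∣ (X ^ (3 * (tri (n - 1 + b) + b)) * powPair n : R⟦X⟧) := by
    refine (pow_dvd_pow X (?_ : _ ≤ 3 * (tri (n - 1 + b) + b) + n)).trans ?_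
    · omega
    · exact pow_add (X : R⟦X⟧) _ _ ▸ mul_dvd_mul_left _ (X_pow_dvd_powPair n)
  have : lambertDouble b n = (-1) ^ n * φ ((-1) ^ b * lambertTerm b) *
      (X ^ (3 * tri (n - 1 - b)) * powPair n +
        X ^ (3 * (tri (n - 1 + b) + b)) * powPair n : R⟦X⟧) := by
    rw [lambertDouble, reflPair, map_mul, map_add, expand_X_pow, expand_X_pow]
    ring
  rw [this]
  exact (dvd_add lower upper).mul_left _

variable [TopologicalSpace R]

/-- The Lambert series `∑ b, ψ_b b / (1 - q ^ (3 b))`, where `ψ_b` is `powPair b` and `q = X`. -/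
def lambertPair : R⟦X⟧ := ∑' b, φ (lambertTerm b) * powPair b

lemma summable_lambertPair : Summable fun b ↦ φ (lambertTerm b) * (powPair b : R⟦X⟧) :=
  summable_nat_of_X_pow_dvd fun b ↦ (X_pow_dvd_powPair b).mul_left _

variable [T2Space R]

lemma hasSum_euler :
    HasSum (fun k : ℤ ↦ (Int.negOnePow k : R⟦X⟧) * X ^ pentagonal k) euler :=
  euler_eq_pentagonalSeries (R := R) ▸ WithPiTopology.hasSum_pentagonalSeries R

lemma expand_lambertTheta : φ (lambertTheta : R⟦X⟧) =
    -2 * ∑' b : ℕ, φ (lambertTerm b) * ((-1) ^ b * X ^ (3 * tri b)) := by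
  rw [lambertTheta, map_mul, expand_tsum _ summable_lambertTheta, map_neg, map_ofNat]
  congr 1
  refine tsum_congr fun b ↦ ?_
  rw [map_mul, map_mul, map_pow, map_neg, map_one, expand_X_pow]
  ring

variable [IsTopologicalRing R]

lemma hasSum_neg_one_pow_mul_powPair :
    HasSum (fun n : ℕ ↦ (-1) ^ n * X ^ (3 * tri (n - 1)) * (powPair n : R⟦X⟧)) (euler + 1) := by
  have key := (hasSum_euler (R := R)).nat_add_neg
  rw [show pentagonal 0 = 0 from rfl, Int.negOnePow_zero, pow_zero, mul_one, Units.val_one,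
    Int.cast_one] at key
  refine key.congr_fun fun n ↦ ?_
  have pos : pentagonal n = 3 * tri (n - 1) + n := by
    zify
    linarith [two_mul_natCast_pentagonal n, two_mul_tri (n - 1)]
  have neg : pentagonal (-n) = 3 * tri (n - 1) + 2 * n := by
    zify
    linarith [two_mul_natCast_pentagonal (-n), two_mul_tri (n - 1)]
  rw [pos, neg, Int.negOnePow_neg, intCast_negOnePow_natCast, powPair]
  ring

lemma hasSum_euler_mul_X_pow_sub (b c : ℕ) :
    HasSum (fun k : ℤ ↦ (Int.negOnePow (k - b) : R⟦X⟧) * X ^ (pentagonal (k - b) + c))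
      (euler * X ^ c) := by
  have shifted := (hasSum_euler (R := R)).mul_right (X ^ c)
  rw [← (Equiv.subRight (b : ℤ)).hasSum_iff] at shifted
  exact shifted.congr_fun fun k ↦ by simp only [Function.comp, Equiv.subRight_apply]; ring

lemma hasSum_euler_mul_X_pow_sub_left (b c : ℕ) :
    HasSum (fun k : ℤ ↦ (Int.negOnePow (k - b) : R⟦X⟧) * X ^ (pentagonal (b - k) + c))
      (euler * X ^ c) := by
  have reflected := (hasSum_euler (R := R)).mul_right (X ^ c)
  rw [← (Equiv.subLeft (b : ℤ)).hasSum_iff] at reflected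
  refine reflected.congr_fun fun k ↦ ?_
  rw [← Int.negOnePow_neg, neg_sub]
  simp only [Function.comp, Equiv.subLeft_apply]
  ring

lemma hasSum_reflPair_mul_powPair (b : ℕ) :
    HasSum (fun n : ℕ ↦ (-1) ^ (n + b) * φ (reflPair n b) * (powPair n : R⟦X⟧))
      (euler * powPair b + 2 * ((-1) ^ b * X ^ (3 * tri b))) := by
  have key := ((hasSum_euler_mul_X_pow_sub (R := R) b b).add
    (hasSum_euler_mul_X_pow_sub_left b (2 * b))).nat_add_neg
  have zero_left : pentagonal (0 - b) + b = 3 * tri b := by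
    zify
    linarith [two_mul_natCast_pentagonal (0 - b), two_mul_tri b]
  have zero_right : pentagonal (b - 0) + 2 * b = 3 * tri b := by
    zify
    linarith [two_mul_natCast_pentagonal (b - 0), two_mul_tri b]
  convert key.congr_fun fun n ↦ ?_ using 1
  · rw [zero_left, zero_right, zero_sub, Int.negOnePow_neg, intCast_negOnePow_natCast, powPair]
    ring
  have pos_left : pentagonal (n - b) + b = 3 * tri (n - 1 - b) + n := by
    zify
    linarith [two_mul_natCast_pentagonal (n - b), two_mul_tri (n - 1 - b)]
  have pos_right : pentagonal (b - n) + 2 * b = 3 * tri (n - 1 - b) + 2 * n := by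
    zify
    linarith [two_mul_natCast_pentagonal (b - n), two_mul_tri (n - 1 - b)]
  have neg_left : pentagonal (-n - b) + b = 3 * (tri (n - 1 + b) + b) + 2 * n := by
    zify
    linarith [two_mul_natCast_pentagonal (-n - b), two_mul_tri (n - 1 + b)]
  have neg_right : pentagonal (b - -n) + 2 * b = 3 * (tri (n - 1 + b) + b) + n := by
    zify
    linarith [two_mul_natCast_pentagonal (b - -n), two_mul_tri (n - 1 + b)]
  rw [pos_left, pos_right, neg_left, neg_right, reflPair, powPair, map_add, expand_X_pow,
    expand_X_pow, Int.negOnePow_sub, Int.negOnePow_sub, Int.negOnePow_neg, Units.val_mul,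
    Int.cast_mul, intCast_negOnePow_natCast, intCast_negOnePow_natCast]
  ring

lemma tsum_lambertDouble_right (b : ℕ) :
    ∑' n, (lambertDouble b n : R⟦X⟧) =
      φ (lambertTerm b) * (euler * powPair b + 2 * ((-1) ^ b * X ^ (3 * tri b))) := by
  refine (((hasSum_reflPair_mul_powPair (R := R) b).mul_left
    (φ (lambertTerm b))).congr_fun fun n ↦ ?_).tsum_eq
  simp only [lambertDouble, map_mul, map_pow, map_neg, map_one]
  ring

lemma tsum_lambertDouble_left (n : ℕ) :
    ∑' b, (lambertDouble b n : R⟦X⟧) =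
      φ euler ^ 3 * (φ (falseTheta n) * powPair n) -
        φ lambertTheta * ((-1) ^ n * X ^ (3 * tri (n - 1)) * powPair n) := by
  have hsum := summable_expand three_ne_zero (summable_lambertLevel (R := R) n)
  have level := congrArg φ (neg_one_pow_mul_lambertLevel (R := R) n)
  rw [lambertLevel, map_mul, map_add, map_mul, map_mul, expand_X_pow, map_pow, map_pow, map_neg,
    map_one, expand_tsum _ (summable_lambertLevel (R := R) n)] at level
  simp only [lambertDouble]
  rw [(hsum.mul_left ((-1) ^ n)).tsum_mul_right (powPair n), hsum.tsum_mul_left]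
  linear_combination powPair n * level

theorem stNumer_mul_expand_euler_pow_three :
    (stNumer * φ euler ^ 3 : R⟦X⟧) = euler * (lambertPair + φ lambertTheta) := by
  have hsum_theta : Summable fun b : ℕ ↦ φ (lambertTerm b) * ((-1) ^ b * X ^ (3 * tri b) : R⟦X⟧) :=
    summable_nat_of_X_pow_dvd fun b ↦
      ((pow_dvd_pow X ((le_tri b).trans (by omega))).mul_left _).mul_left _
  have hsum_false : Summable fun n ↦ φ (falseTheta n) * (powPair n : R⟦X⟧) :=
    summable_nat_of_X_pow_dvd fun n ↦ (X_pow_dvd_powPair n).mul_left _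
  have numer : (stNumer : R⟦X⟧) = ∑' n, φ (falseTheta n) * powPair n := by
    rw [stNumer_eq_tsum_falseTheta, hsum_false.tsum_eq_zero_add]
    simp [falseTheta]
  have by_rows : ∑' b, ∑' n, (lambertDouble b n : R⟦X⟧) =
      euler * lambertPair - φ lambertTheta := by
    have split (b : ℕ) : ∑' n, (lambertDouble b n : R⟦X⟧) =
        euler * (φ (lambertTerm b) * powPair b) +
          2 * (φ (lambertTerm b) * ((-1) ^ b * X ^ (3 * tri b))) := by
      rw [tsum_lambertDouble_right]
      ring
    have hsum_pair := summable_lambertPair (R := R)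
    rw [tsum_congr split, (hsum_pair.mul_left _).tsum_add (hsum_theta.mul_left _),
      hsum_pair.tsum_mul_left, hsum_theta.tsum_mul_left, expand_lambertTheta,
      lambertPair]
    ring
  have by_cols : ∑' n, ∑' b, (lambertDouble b n : R⟦X⟧) =
      φ euler ^ 3 * stNumer - φ lambertTheta * (euler + 1) := by
    have hsum_sign := hasSum_neg_one_pow_mul_powPair (R := R)
    rw [tsum_congr tsum_lambertDouble_left, (hsum_false.mul_left _).tsum_sub
      (hsum_sign.summable.mul_left _), hsum_false.tsum_mul_left,
      hsum_sign.summable.tsum_mul_left, hsum_sign.tsum_eq, numer]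
  rw [tsum_comm_of_X_pow_dvd X_pow_dvd_lambertDouble, by_cols] at by_rows
  linear_combination by_rows

lemma lambertPair_eq : (lambertPair : R⟦X⟧) = lambert - φ lambert := by
  have hsum := summable_lambert (R := R)
  rw [lambertPair, lambert, expand_tsum _ hsum,
    ← hsum.tsum_sub (summable_expand three_ne_zero hsum)]
  refine tsum_congr fun b ↦ ?_
  obtain rfl | hb := eq_or_ne b 0
  · simp [lambertTerm]
  have expanded := congrArg φ (one_sub_X_pow_mul_lambertTerm (R := R) b)
  rw [map_mul, map_sub, map_one, expand_X_pow, map_natCast] at expanded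
  refine (isUnit_one_sub_X_pow (R := R) (n := 3 * b) (by omega)).mul_left_cancel ?_
  rw [map_mul, expand_X_pow, powPair]
  linear_combination (X ^ b + X ^ (2 * b) + X ^ (3 * b)) *
    (expanded - one_sub_X_pow_mul_lambertTerm (R := R) b)

end LambertExpansion

/-! ### Three-cores -/

section ThreeCores

/-- The equivalence `(k, i) ↦ (i + k⁺, i + k⁻)` sorting pairs of naturals by their difference. -/
def diffMinEquiv : ℤ × ℕ ≃ ℕ × ℕ where
  toFun p := (p.2 + p.1.toNat, p.2 + (-p.1).toNat)
  invFun p := ((p.1 : ℤ) - p.2, min p.1 p.2)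
  left_inv := by rintro ⟨_, _⟩; ext <;> simp; omega
  right_inv := by rintro ⟨_, _⟩; ext <;> simp <;> omega

/-- The exponent `k⁺ + 2 k⁻`. -/
def diffWeight (k : ℤ) : ℕ := k.toNat + 2 * (-k).toNat

variable {R : Type*} [CommRing R]

/-- The `(l, m)` term of the product of the series `cubePochInv 1` and `cubePochInv 2`. -/
def cubePochTerm (l m : ℕ) : R⟦X⟧ := X ^ (l + 2 * m) * φ (qFactInv l * qFactInv m)

lemma cubePochTerm_diffMinEquiv (k : ℤ) (i : ℕ) :
    (cubePochTerm (diffMinEquiv (k, i)).1 (diffMinEquiv (k, i)).2 : R⟦X⟧) =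
      X ^ diffWeight k * φ (X ^ i * (qFactInv i * qFactInv (i + k.natAbs))) := by
  simp only [cubePochTerm, diffMinEquiv, diffWeight, Equiv.coe_fn_mk, map_mul, expand_X_pow]
  rcases Int.eq_nat_or_neg k with ⟨m, rfl | rfl⟩ <;>
    simp only [Int.natAbs_neg, neg_neg, Int.natAbs_natCast, Int.toNat_natCast,
      Int.toNat_neg_natCast, add_zero] <;> ring

variable [TopologicalSpace R]

/-- Euler's series `∑ l, q ^ (a l) / (q³; q³)_l` for `1 / (q ^ a; q³)_∞`, with `q = X`. -/
def cubePochInv (a : ℕ) : R⟦X⟧ := ∑' l, X ^ (a * l) * φ (qFactInv l)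

/-- The generating series `(q³; q³)_∞³ / (q; q)_∞` of 3-core partitions, with `q = X`. -/
def threeCore : R⟦X⟧ := φ euler ^ 3 * eulerInv

lemma summable_cubePochInv {a : ℕ} (ha : a ≠ 0) :
    Summable fun l ↦ (X ^ (a * l) * φ (qFactInv l) : R⟦X⟧) :=
  summable_nat_of_X_pow_dvd fun l ↦
    (pow_dvd_pow X (Nat.le_mul_of_pos_left l (Nat.pos_of_ne_zero ha))).mul_right _

lemma summable_cubePochTerm :
    Summable fun p : ℕ × ℕ ↦ (cubePochTerm p.1 p.2 : R⟦X⟧) :=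
  summable_prod_of_X_pow_dvd fun _ ↦ (pow_dvd_pow X (by omega)).mul_right _

lemma summable_diffWeight_term (f : ℤ → R⟦X⟧) :
    Summable fun k : ℤ ↦ X ^ diffWeight k * f k :=
  summable_of_X_pow_dvd (w := diffWeight)
    (tendsto_cofinite_atTop_of_natAbs_le (c := 0) fun k ↦ by unfold diffWeight; omega)
    fun _ ↦ dvd_mul_right _ _

variable [IsTopologicalRing R] [T2Space R]

lemma cubePochInv_add_three {a : ℕ} (ha : a ≠ 0) :
    (cubePochInv (a + 3) : R⟦X⟧) = (1 - X ^ a) * cubePochInv a := by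
  have term_sub (l : ℕ) : (X ^ (a * (l + 1)) * φ (qFactInv (l + 1)) -
      X ^ ((a + 3) * (l + 1)) * φ (qFactInv (l + 1)) : R⟦X⟧) =
        X ^ a * (X ^ (a * l) * φ (qFactInv l)) := by
    rw [qFactInv_eq_mul_succ l, map_mul, map_sub, map_one, expand_X_pow]
    ring
  have hsub := (summable_cubePochInv (R := R) ha).sub
    (summable_cubePochInv (R := R) (a := a + 3) (by omega))
  have : (cubePochInv a - cubePochInv (a + 3) : R⟦X⟧) = X ^ a * cubePochInv a := by
    rw [cubePochInv, cubePochInv, ← (summable_cubePochInv (R := R) ha).tsum_sub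
      (summable_cubePochInv (R := R) (by omega)), hsub.tsum_eq_zero_add,
      ← (summable_cubePochInv (R := R) ha).tsum_mul_left]
    simp only [term_sub, mul_zero, pow_zero, sub_self, zero_add]
  linear_combination -this

lemma tendsto_cubePochInv :
    Tendsto (fun a ↦ (cubePochInv a : R⟦X⟧)) atTop (𝓝 1) := by
  refine tendsto_of_X_pow_dvd_sub fun a ↦ ?_
  rcases eq_or_ne a 0 with rfl | ha
  · exact pow_zero (X : R⟦X⟧) ▸ one_dvd _
  rw [cubePochInv, (summable_cubePochInv (R := R) ha).tsum_eq_zero_add]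
  simp only [mul_zero, pow_zero, qFactInv_zero, map_one, mul_one, add_sub_cancel_left]
  exact X_pow_dvd_tsum fun l ↦ (pow_dvd_pow X (Nat.le_mul_of_pos_right a l.succ_pos)).mul_right _

lemma cubePochInv_one_mul_two_mul_qPoch (n : ℕ) :
    (cubePochInv 1 * cubePochInv 2 * qPoch 1 (3 * n) : R⟦X⟧) =
      cubePochInv (3 * n + 1) * cubePochInv (3 * n + 2) * φ (qPoch 1 n) := by
  induction n with
  | zero => simp
  | succ n ih =>
    have step₁ := cubePochInv_add_three (R := R) (a := 3 * n + 1) (by omega)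
    have step₂ := cubePochInv_add_three (R := R) (a := 3 * n + 2) (by omega)
    rw [show 3 * (n + 1) + 1 = 3 * n + 1 + 3 by ring, show 3 * (n + 1) + 2 = 3 * n + 2 + 3 by ring,
      show 3 * (n + 1) = 3 * n + 1 + 1 + 1 by ring, step₁, step₂, qPoch_succ, qPoch_succ,
      qPoch_succ, qPoch_succ, map_mul, map_sub, map_one, expand_X_pow]
    linear_combination (1 - X ^ (3 * n + 1)) * (1 - X ^ (3 * n + 2)) *
      (1 - X ^ (3 * n + 3)) * ih

lemma cubePochInv_one_mul_two_mul_euler :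
    (cubePochInv 1 * cubePochInv 2 * euler : R⟦X⟧) = φ euler := by
  have h3 : Tendsto (3 * ·) atTop (atTop : Filter ℕ) :=
    tendsto_atTop_mono (fun n ↦ Nat.le_mul_of_pos_left n three_pos) tendsto_id
  have tendsto_shift (c : ℕ) :
      Tendsto (fun n ↦ (cubePochInv (3 * n + c) : R⟦X⟧)) atTop (𝓝 1) :=
    tendsto_cubePochInv.comp (tendsto_atTop_mono (fun _ ↦ Nat.le_add_right _ _) h3)
  have tendsto_left : Tendsto (fun n ↦ (cubePochInv 1 * cubePochInv 2 * qPoch 1 (3 * n) : R⟦X⟧))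
      atTop (𝓝 (cubePochInv 1 * cubePochInv 2 * euler)) :=
    (tendsto_qPoch_one.comp h3).const_mul _
  have tendsto_expand : Tendsto (fun n ↦ φ (qPoch 1 n : R⟦X⟧)) atTop (𝓝 (φ euler)) :=
    ((continuous_expand three_ne_zero).tendsto _).comp tendsto_qPoch_one
  have tendsto_right := ((tendsto_shift 1).mul (tendsto_shift 2)).mul tendsto_expand
  simp only [← cubePochInv_one_mul_two_mul_qPoch, one_mul] at tendsto_right
  exact tendsto_nhds_unique tendsto_left tendsto_right

lemma cubePochInv_one_mul_two :
    (cubePochInv 1 * cubePochInv 2 : R⟦X⟧) =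
      ∑' k : ℤ, X ^ diffWeight k * φ (qBessel k.natAbs) := by
  have term_eq (l m : ℕ) : (X ^ (1 * l) * φ (qFactInv l) * (X ^ (2 * m) * φ (qFactInv m)) : R⟦X⟧) =
      cubePochTerm l m := by
    rw [cubePochTerm, map_mul]
    ring
  have summable_fiber (k : ℤ) : Summable fun i ↦ φ (X ^ i * (qFactInv i *
      qFactInv (i + k.natAbs)) : R⟦X⟧) := summable_expand _ (summable_qBessel (R := R) _)
  have summable_diffMin : Summable fun p : ℤ × ℕ ↦
      (cubePochTerm (diffMinEquiv p).1 (diffMinEquiv p).2 : R⟦X⟧) :=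
    diffMinEquiv.summable_iff.mpr (summable_cubePochTerm (R := R))
  calc (cubePochInv 1 * cubePochInv 2 : R⟦X⟧)
      = ∑' p : ℕ × ℕ, cubePochTerm p.1 p.2 := by
        rw [cubePochInv, cubePochInv, (summable_cubePochInv (R := R) one_ne_zero).tsum_mul_tsum
          (summable_cubePochInv (R := R) two_ne_zero)] <;> simp only [term_eq]
        exact summable_cubePochTerm
    _ = ∑' p : ℤ × ℕ, cubePochTerm (diffMinEquiv p).1 (diffMinEquiv p).2 :=
        (diffMinEquiv.tsum_eq fun p ↦ cubePochTerm p.1 p.2).symm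
    _ = ∑' k : ℤ, ∑' i, X ^ diffWeight k * φ (X ^ i * (qFactInv i * qFactInv (i + k.natAbs))) := by
        rw [summable_diffMin.tsum_prod'] <;> simp only [cubePochTerm_diffMinEquiv]
        exact fun k ↦ (summable_fiber k).mul_left _
    _ = _ := tsum_congr fun k ↦ by
        rw [(summable_fiber k).tsum_mul_left, qBessel, expand_tsum _ (summable_qBessel (R := R) _)]

lemma threeCore_eq_tsum :
    (threeCore : R⟦X⟧) = ∑' k : ℤ, X ^ diffWeight k * φ (partialTheta k.natAbs) := by
  have hsum := summable_diffWeight_term fun k ↦ φ (qBessel k.natAbs : R⟦X⟧)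
  calc threeCore = φ euler ^ 2 * (cubePochInv 1 * cubePochInv 2) := by
        rw [threeCore]
        linear_combination -φ euler ^ 2 * eulerInv * cubePochInv_one_mul_two_mul_euler (R := R) +
          φ euler ^ 2 * (cubePochInv 1 * cubePochInv 2) * euler_mul_eulerInv (R := R)
    _ = _ := by
        rw [cubePochInv_one_mul_two, ← hsum.tsum_mul_left]
        refine tsum_congr fun k ↦ ?_
        rw [← euler_sq_mul_qBessel, map_mul, map_pow]
        ring

end ThreeCores

section DivisorSum

lemma filter_dvd_divisors_mul (m : ℕ) {p : ℕ} (hp : p ≠ 0) :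
    {d ∈ (p * m).divisors | p ∣ d} = m.divisors.image (p * ·) := by
  ext d
  simp only [mem_filter, mem_image, Nat.mem_divisors]
  constructor
  · rintro ⟨⟨hd, hm⟩, c, rfl⟩
    exact ⟨c, ⟨Nat.dvd_of_mul_dvd_mul_left (Nat.pos_of_ne_zero hp) hd, right_ne_zero_of_mul hm⟩,
      rfl⟩
  · rintro ⟨c, ⟨hc, hm⟩, rfl⟩
    exact ⟨⟨Nat.mul_dvd_mul_left p hc, mul_ne_zero hp hm⟩, dvd_mul_right p c⟩

lemma filter_not_dvd_divisors_mul (m : ℕ) {p : ℕ} (hp : p.Prime) :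
    {d ∈ (p * m).divisors | ¬p ∣ d} = {d ∈ m.divisors | ¬p ∣ d} := by
  ext d
  simp only [mem_filter, Nat.mem_divisors, mul_ne_zero_iff, hp.ne_zero, ne_eq, not_false_eq_true,
    true_and, and_congr_left_iff]
  exact fun hd _ ↦ ((hp.coprime_iff_not_dvd.mpr hd).symm).dvd_mul_left

variable {A : Type*} [AddCommGroup A] {χ : ℕ → A} {p : ℕ}

lemma sum_filter_dvd_divisors_mul (hp : p ≠ 0) (hχ : ∀ d, χ (p * d) = -χ d) (m : ℕ) :
    ∑ d ∈ (p * m).divisors with p ∣ d, χ d = -∑ d ∈ m.divisors, χ d := by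
  rw [filter_dvd_divisors_mul m hp, sum_image fun _ _ _ _ h ↦ Nat.eq_of_mul_eq_mul_left
    (Nat.pos_of_ne_zero hp) h, ← sum_neg_distrib]
  exact sum_congr rfl fun d _ ↦ hχ d

lemma sum_divisors_prime_mul (hp : p.Prime) (hχ : ∀ d, χ (p * d) = -χ d) (m : ℕ) :
    ∑ d ∈ (p * m).divisors, χ d = -∑ d ∈ m.divisors with p ∣ d, χ d := by
  rw [← sum_filter_add_sum_filter_not _ (p ∣ ·), sum_filter_dvd_divisors_mul hp.ne_zero hχ,
    filter_not_dvd_divisors_mul m hp, ← sum_filter_add_sum_filter_not m.divisors (p ∣ ·)]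
  abel

lemma sum_divisors_prime_mul_of_not_dvd (hp : p.Prime) (hχ : ∀ d, χ (p * d) = -χ d) {m : ℕ}
    (hm : ¬p ∣ m) : ∑ d ∈ (p * m).divisors, χ d = 0 := by
  rw [sum_divisors_prime_mul hp hχ, filter_false_of_mem, sum_empty, neg_zero]
  exact fun d hd hpd ↦ hm (hpd.trans (Nat.dvd_of_mem_divisors hd))

lemma sum_divisors_prime_mul_prime_mul (hp : p.Prime) (hχ : ∀ d, χ (p * d) = -χ d) (m : ℕ) :
    ∑ d ∈ (p * (p * m)).divisors, χ d = ∑ d ∈ m.divisors, χ d := by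
  rw [sum_divisors_prime_mul hp hχ, sum_filter_dvd_divisors_mul hp.ne_zero hχ, neg_neg]

end DivisorSum

section ThreeCoreCoeff

/-- The nontrivial character modulo `6`. -/
def χ₆ : MulChar (ZMod 6) ℤ where
  toFun a :=
    match a with
    | 0 | 2 | 3 | 4 => 0
    | 1 => 1
    | 5 => -1
  map_one' := rfl
  map_mul' := by decide
  map_nonunit' := by decide

/-- The exponent of the `(k, j)` term of `threeCore` as a double series. -/
def coreExponent (k : ℤ) (j : ℕ) : ℕ := diffWeight k + 3 * (tri j + k.natAbs * j)

/-- The odd factor in the factorization `oddFactor_mul_evenFactor` of `2 (3 e + 1)`, where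
`e = coreExponent k j`. -/
def oddFactor (k : ℤ) (j : ℕ) : ℕ :=
  if 0 ≤ k then (if j % 2 = 0 then 3 * j + 1 else 3 * j + 2 + 6 * k.natAbs)
  else (if j % 2 = 0 then 3 * j + 1 + 6 * k.natAbs else 3 * j + 2)

/-- The cofactor of `oddFactor k j`. -/
def evenFactor (k : ℤ) (j : ℕ) : ℕ :=
  if 0 ≤ k then (if j % 2 = 0 then 3 * j + 2 + 6 * k.natAbs else 3 * j + 1)
  else (if j % 2 = 0 then 3 * j + 2 else 3 * j + 1 + 6 * k.natAbs)

lemma oddFactor_mul_evenFactor (k : ℤ) (j : ℕ) :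
    oddFactor k j * evenFactor k j = 2 * (3 * coreExponent k j + 1) := by
  have htri := two_mul_tri j
  unfold oddFactor evenFactor coreExponent diffWeight
  zify
  rcases le_or_gt 0 k with hk | hk
  · simp only [hk, if_true, abs_of_nonneg hk, Int.toNat_of_nonneg hk,
      Int.toNat_of_nonpos (neg_nonpos.mpr hk)]
    split_ifs <;> push_cast <;> linear_combination -9 * htri
  · have hk' : ¬0 ≤ k := hk.not_ge
    simp only [hk', if_false, abs_of_neg hk, Int.toNat_of_nonpos hk.le,
      Int.toNat_of_nonneg (neg_nonneg.mpr hk.le)]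
    split_ifs <;> push_cast <;> linear_combination -9 * htri

lemma oddFactor_mod_six (k : ℤ) (j : ℕ) : oddFactor k j % 6 = if j % 2 = 0 then 1 else 5 := by
  unfold oddFactor
  split_ifs <;> omega

lemma eq_of_oddFactor_eq_of_evenFactor_eq {k k' : ℤ} {j j' : ℕ}
    (ho : oddFactor k j = oddFactor k' j') (he : evenFactor k j = evenFactor k' j') :
    k = k' ∧ j = j' := by
  unfold oddFactor at ho
  unfold evenFactor at he
  split_ifs at ho he <;> omega

lemma exists_oddFactor_eq_and_evenFactor_eq {o e : ℕ} (ho : o % 2 = 1) (he : e % 2 = 0)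
    (h : o % 3 = 1 ∧ e % 3 = 2 ∨ o % 3 = 2 ∧ e % 3 = 1) :
    ∃ k j, oddFactor k j = o ∧ evenFactor k j = e := by
  refine ⟨if min o e % 3 = 1 then ((max o e - min o e - 1) / 6 : ℕ)
    else -((max o e - min o e + 1) / 6 : ℕ), min o e / 3, ?_⟩
  unfold oddFactor evenFactor
  split_ifs <;> omega

lemma χ₆_oddFactor (k : ℤ) (j : ℕ) : χ₆ (oddFactor k j : ℕ) = (-1) ^ j := by
  rw [← ZMod.natCast_mod, oddFactor_mod_six k j]
  rcases Nat.mod_two_eq_zero_or_one j with hj | hj <;> rw [hj]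
  · exact (Nat.even_iff.mpr hj).neg_one_pow.symm
  · exact (Nat.odd_iff.mpr hj).neg_one_pow.symm

lemma bijOn_oddFactor (n : ℕ) :
    Set.BijOn (fun p : ℤ × ℕ ↦ oddFactor p.1 p.2) {p | coreExponent p.1 p.2 = n}
      ({d ∈ (3 * n + 1).divisors | d % 2 = 1} : Finset ℕ) := by
  have oddFactor_odd (k : ℤ) (j : ℕ) : oddFactor k j % 2 = 1 := by
    have hmod := oddFactor_mod_six k j
    split_ifs at hmod <;> omega
  refine ⟨?_, ?_, ?_⟩
  · rintro ⟨k, j⟩ rfl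
    have hodd := oddFactor_odd k j
    simp only [coe_filter, Nat.mem_divisors, Set.mem_ofPred_eq]
    refine ⟨⟨?_, Nat.succ_ne_zero _⟩, hodd⟩
    exact (Nat.coprime_two_right.mpr (Nat.odd_iff.mpr hodd)).dvd_of_dvd_mul_left
      ⟨_, (oddFactor_mul_evenFactor k j).symm⟩
  · rintro ⟨k, j⟩ rfl ⟨k', j'⟩ hn ho
    simp only [Set.mem_ofPred_eq] at hn ho
    have hprod := oddFactor_mul_evenFactor k' j'
    rw [hn, ← oddFactor_mul_evenFactor, ← ho] at hprod
    have hpos : 0 < oddFactor k j := by have := oddFactor_odd k j; omega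
    have := eq_of_oddFactor_eq_of_evenFactor_eq ho (Nat.eq_of_mul_eq_mul_left hpos hprod).symm
    exact Prod.ext this.1 this.2
  · intro d hd
    simp only [coe_filter, Nat.mem_divisors, Set.mem_ofPred_eq] at hd
    obtain ⟨⟨⟨e, he⟩, -⟩, hodd⟩ := hd
    have hmod : d % 3 = 1 ∧ 2 * e % 3 = 2 ∨ d % 3 = 2 ∧ 2 * e % 3 = 1 := by
      have hde : (d % 3) * (e % 3) % 3 = 1 := by rw [← Nat.mul_mod]; omega
      have := Nat.mod_lt d three_pos
      have := Nat.mod_lt e three_pos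
      rw [Nat.mul_mod 2 e]
      generalize d % 3 = x, e % 3 = y at *
      interval_cases x <;> interval_cases y <;> simp_all
    obtain ⟨k, j, hk, hj⟩ := exists_oddFactor_eq_and_evenFactor_eq hodd (by omega) hmod
    refine ⟨(k, j), ?_, hk⟩
    have := oddFactor_mul_evenFactor k j
    rw [hk, hj, mul_left_comm, ← he] at this
    simp only [Set.mem_ofPred_eq]
    omega

lemma sum_divisors_filter_odd_χ₆ (n : ℕ) :
    ∑ d ∈ n.divisors with d % 2 = 1, χ₆ (d : ℕ) = ∑ d ∈ n.divisors, χ₆ (d : ℕ) := by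
  refine sum_filter_of_ne fun d _ hd ↦ ?_
  contrapose! hd
  refine χ₆.map_nonunit fun hunit ↦ ?_
  have := (ZMod.isUnit_iff_coprime d 6).mp hunit
  exact hd (Nat.odd_iff.mp (Nat.coprime_two_right.mp (this.coprime_dvd_right ⟨3, rfl⟩)))

variable {R : Type*} [CommRing R] [TopologicalSpace R]

lemma summable_threeCore_term :
    Summable fun p : ℤ × ℕ ↦ ((-1) ^ p.2 * X ^ coreExponent p.1 p.2 : R⟦X⟧) := by
  refine summable_of_X_pow_dvd (w := fun p ↦ coreExponent p.1 p.2) ?_ fun _ ↦ dvd_mul_left _ _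
  refine tendsto_atTop.mpr fun N ↦ eventually_cofinite.mpr ?_
  refine ((Set.finite_Icc (-N : ℤ) N).prod (Set.finite_le_nat N)).subset fun ⟨k, j⟩ hp ↦ ?_
  have := le_tri j
  have := Nat.zero_le (k.natAbs * j)
  simp only [coreExponent, diffWeight, Set.mem_ofPred_eq, Set.mem_prod, Set.mem_Icc] at hp ⊢
  omega

variable [IsTopologicalRing R] [T2Space R]

lemma threeCore_eq_tsum_prod :
    (threeCore : R⟦X⟧) = ∑' p : ℤ × ℕ, (-1) ^ p.2 * X ^ coreExponent p.1 p.2 := by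
  have term_eq (k : ℤ) (j : ℕ) : ((-1) ^ j * X ^ coreExponent k j : R⟦X⟧) =
      X ^ diffWeight k * φ ((-1) ^ j * X ^ (tri j + k.natAbs * j)) := by
    rw [coreExponent, map_mul, map_pow, map_neg, map_one, expand_X_pow]
    ring
  have summable_fiber (k : ℤ) : Summable fun j : ℕ ↦
      φ ((-1) ^ j * X ^ (tri j + k.natAbs * j) : R⟦X⟧) :=
    summable_expand _ (summable_partialTheta (R := R) _)
  rw [threeCore_eq_tsum, (summable_threeCore_term (R := R)).tsum_prod'] <;> simp only [term_eq]
  · refine tsum_congr fun k ↦ ?_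
    rw [(summable_fiber k).tsum_mul_left, partialTheta,
      expand_tsum _ (summable_partialTheta (R := R) _)]
  · exact fun k ↦ (summable_fiber k).mul_left _

theorem coeff_threeCore (n : ℕ) :
    coeff n (threeCore : R⟦X⟧) = ∑ d ∈ (3 * n + 1).divisors, (χ₆ (d : ℕ) : R) := by
  have coeff_term (p : ℤ × ℕ) : coeff n ((-1) ^ p.2 * X ^ coreExponent p.1 p.2 : R⟦X⟧) =
      {p : ℤ × ℕ | coreExponent p.1 p.2 = n}.indicator
        (fun p ↦ (χ₆ (oddFactor p.1 p.2 : ℕ) : R)) p := by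
    have hC : ((-1) ^ p.2 : R⟦X⟧) = C ((-1) ^ p.2) := by simp
    rw [hC, coeff_C_mul, coeff_X_pow, mul_ite, mul_one, mul_zero]
    simp only [χ₆_oddFactor, Set.indicator_apply, Set.mem_ofPred_eq, Int.cast_pow,
      Int.cast_neg, Int.cast_one, eq_comm]
  rw [threeCore_eq_tsum_prod, coeff_tsum (summable_threeCore_term (R := R)), tsum_congr coeff_term,
    ← _root_.tsum_subtype, ← Int.cast_sum, ← sum_divisors_filter_odd_χ₆, Int.cast_sum,
    ← Finset.tsum_subtype']
  exact ((bijOn_oddFactor n).equiv _).tsum_eq fun d ↦ (χ₆ (d : ℕ) : R)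

lemma χ₆_five_mul (d : ℕ) : χ₆ ((5 * d : ℕ) : ZMod 6) = -χ₆ (d : ℕ) := by
  rw [Nat.cast_mul, map_mul, show χ₆ ((5 : ℕ) : ZMod 6) = -1 from rfl, neg_one_mul]

lemma coeff_threeCore_twentyfive_mul_add_eight (m : ℕ) :
    coeff (25 * m + 8) (threeCore : R⟦X⟧) = coeff m threeCore := by
  simp only [coeff_threeCore, ← Int.cast_sum]
  rw [show 3 * (25 * m + 8) + 1 = 5 * (5 * (3 * m + 1)) by ring,
    sum_divisors_prime_mul_prime_mul Nat.prime_five χ₆_five_mul]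

lemma coeff_threeCore_of_mod_five_eq_three {n : ℕ} (h5 : n % 5 = 3) (h25 : n % 25 ≠ 8) :
    coeff n (threeCore : R⟦X⟧) = 0 := by
  obtain ⟨m, hm⟩ : 5 ∣ 3 * n + 1 := by omega
  rw [coeff_threeCore, ← Int.cast_sum, hm,
    sum_divisors_prime_mul_of_not_dvd Nat.prime_five χ₆_five_mul (by omega), Int.cast_zero]

end ThreeCoreCoeff

/-! ### Residue classes of exponents -/

section ResidueClass

variable {R : Type*} [CommRing R] {m : ℕ}

/-- The power series whose exponents all lie in the residue class `c` modulo `m`. -/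
def residueClass (c : ZMod m) : Submodule R R⟦X⟧ where
  carrier := {f | ∀ n : ℕ, (n : ZMod m) ≠ c → coeff n f = 0}
  add_mem' hf hg n hn := by rw [map_add, hf n hn, hg n hn, add_zero]
  zero_mem' _ _ := map_zero _
  smul_mem' a f hf n hn := by rw [map_smul, hf n hn, smul_zero]

/-- The terms of a power series whose exponents lie in the residue class `c` modulo `m`. -/
def residuePart (c : ZMod m) : R⟦X⟧ →ₗ[R] R⟦X⟧ where
  toFun f := mk fun n ↦ if (n : ZMod m) = c then coeff n f else 0
  map_add' f g := by ext n; simp only [coeff_mk, map_add]; split_ifs <;> simp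
  map_smul' a f := by ext n; simp

lemma coeff_residuePart (c : ZMod m) (f : R⟦X⟧) (n : ℕ) :
    coeff n (residuePart c f) = if (n : ZMod m) = c then coeff n f else 0 := by
  simp only [residuePart, LinearMap.coe_mk, AddHom.coe_mk, coeff_mk]

lemma residuePart_mem (c : ZMod m) (f : R⟦X⟧) : residuePart c f ∈ residueClass c :=
  fun n hn ↦ by rw [coeff_residuePart, if_neg hn]

lemma residuePart_of_mem {c : ZMod m} {f : R⟦X⟧} (hf : f ∈ residueClass c) :
    residuePart c f = f := by
  ext n
  rw [coeff_residuePart]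
  split_ifs with hn
  exacts [rfl, (hf n hn).symm]

lemma residuePart_of_mem_of_ne {c d : ZMod m} {f : R⟦X⟧} (hf : f ∈ residueClass d) (h : d ≠ c) :
    residuePart c f = 0 := by
  ext n
  rw [coeff_residuePart]
  split_ifs with hn
  exacts [hf n (hn.trans_ne h.symm), rfl]

lemma X_pow_mem_residueClass (n : ℕ) : (X ^ n : R⟦X⟧) ∈ residueClass (n : ZMod m) := by
  intro k hk
  rw [coeff_X_pow, if_neg]
  exact fun h ↦ hk (congrArg _ h)

lemma residuePart_mul_of_mem {d : ZMod m} {f : R⟦X⟧} (hf : f ∈ residueClass d) (c : ZMod m)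
    (g : R⟦X⟧) : residuePart c (f * g) = f * residuePart (c - d) g := by
  ext n
  rw [coeff_residuePart, coeff_mul, coeff_mul, ite_sum_zero]
  refine sum_congr rfl fun p hp ↦ ?_
  by_cases hd : (p.1 : ZMod m) = d
  · rw [coeff_residuePart, ← mem_antidiagonal.mp hp, Nat.cast_add, hd, mul_ite, mul_zero]
    simp only [eq_sub_iff_add_eq']
  · rw [hf p.1 hd, zero_mul, zero_mul, ite_self]

instance : SetLike.GradedMonoid (residueClass : ZMod m → Submodule R R⟦X⟧) where
  one_mem := by simpa using X_pow_mem_residueClass (R := R) (m := m) 0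
  mul_mem c d f g hf hg := by
    rw [← residuePart_of_mem hg, ← add_sub_cancel_left c d, ← residuePart_mul_of_mem hf,
      add_sub_cancel_left]
    exact residuePart_mem _ _

lemma intCast_mul_X_pow_mem_residueClass (a : ℤ) (n : ℕ) :
    (a : R⟦X⟧) * X ^ n ∈ residueClass (n : ZMod m) := by
  have coeff_mem : (a : R⟦X⟧) ∈ residueClass (0 : ZMod m) := SetLike.intCast_mem_graded _ a
  simpa only [zero_add] using SetLike.mul_mem_graded coeff_mem (X_pow_mem_residueClass n)

lemma mem_residueClass_zero_of_mul_eq_one {f g : R⟦X⟧} (hf : f ∈ residueClass (0 : ZMod m))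
    (h : f * g = 1) : g ∈ residueClass (0 : ZMod m) := by
  have part_one : f * residuePart (0 : ZMod m) g = 1 := by
    conv_lhs => rw [← sub_zero (0 : ZMod m), ← residuePart_mul_of_mem hf, h]
    exact residuePart_of_mem (SetLike.one_mem_graded _)
  rw [(left_inv_eq_right_inv ((mul_comm g f).trans h) part_one)]
  exact residuePart_mem 0 g

lemma sum_residuePart [NeZero m] (f : R⟦X⟧) : ∑ c : ZMod m, residuePart c f = f := by
  ext n
  simp only [map_sum, coeff_residuePart, sum_ite_eq, mem_univ, if_true]

lemma residuePart_expand {k : ℕ} (hk : k ≠ 0) (hu : IsUnit (k : ZMod m)) (c : ZMod m)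
    (f : R⟦X⟧) :
    residuePart ((k : ZMod m) * c) (expand k hk f) = expand k hk (residuePart c f) := by
  ext n
  rw [coeff_residuePart, coeff_expand, coeff_expand]
  by_cases hn : k ∣ n
  · obtain ⟨j, rfl⟩ := hn
    simp only [dvd_mul_right, if_true, Nat.mul_div_cancel_left j (Nat.pos_of_ne_zero hk),
      coeff_residuePart, Nat.cast_mul, hu.mul_right_inj]
  · simp only [if_neg hn, ite_self]

lemma expand_mem_residueClass {k : ℕ} (hk : k ≠ 0) (hu : IsUnit (k : ZMod m)) {c : ZMod m}
    {f : R⟦X⟧} (hf : f ∈ residueClass c) : expand k hk f ∈ residueClass ((k : ZMod m) * c) := by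
  rw [← residuePart_of_mem hf, ← residuePart_expand hk hu]
  exact residuePart_mem _ _

lemma residuePart_tsum [TopologicalSpace R] [T2Space R] {ι : Type*} (c : ZMod m) {f : ι → R⟦X⟧}
    (hf : Summable f) : residuePart c (∑' i, f i) = ∑' i, residuePart c (f i) := by
  refine (((WithPiTopology.hasSum_iff_hasSum_coeff R).mpr fun d ↦ ?_).tsum_eq).symm
  simp only [coeff_residuePart]
  split_ifs
  exacts [(WithPiTopology.hasSum_iff_hasSum_coeff R).mp hf.hasSum d, hasSum_zero]

lemma residuePart_tsum_eq_zero [TopologicalSpace R] [T2Space R] {ι : Type*} {c : ZMod m}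
    {f : ι → R⟦X⟧} (h : ∀ i, residuePart c (f i) = 0) : residuePart c (∑' i, f i) = 0 := by
  by_cases hf : Summable f
  · simp only [residuePart_tsum c hf, h, tsum_zero]
  · rw [tsum_eq_zero_of_not_summable hf, map_zero]

end ResidueClass

section Derivative

lemma X_mul_derivative_of_mem_residueClass {m : ℕ} {c : ZMod m} {f : (ZMod m)⟦X⟧}
    (hf : f ∈ residueClass c) : X * d⁄dX (ZMod m) f = C c * f := by
  ext n
  obtain _ | n := n
  · by_cases hc : c = 0
    · simp [hc]
    · simp [hf 0 (by simpa using Ne.symm hc)]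
  rw [coeff_succ_X_mul, coeff_derivative, coeff_C_mul, mul_comm, ← Nat.cast_succ]
  by_cases hn : ((n + 1 : ℕ) : ZMod m) = c
  · rw [hn]
  · rw [hf _ hn, mul_zero, mul_zero]

variable {R : Type*} [CommRing R]

lemma X_mul_derivative_X_pow (n : ℕ) : X * d⁄dX R (X ^ n) = (n : R⟦X⟧) * X ^ n := by
  obtain _ | n := n
  · simp
  · rw [derivative_pow, derivative_X, add_tsub_cancel_right, pow_succ']
    ring

lemma X_mul_derivative_qPoch_one (n : ℕ) :
    X * d⁄dX R (qPoch 1 n) = -(qPoch 1 n * ∑ b ∈ range (n + 1), lambertTerm b * X ^ b) := by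
  induction n with
  | zero => simp [lambertTerm]
  | succ n ih =>
    rw [qPoch_succ, Derivation.leibniz, smul_eq_mul, smul_eq_mul, map_sub, derivative_one,
      sum_range_succ _ (n + 1), add_comm 1 n]
    linear_combination (1 - X ^ (n + 1)) * ih - qPoch 1 n * X_mul_derivative_X_pow (R := R) (n + 1)
      + qPoch 1 n * X ^ (n + 1) * one_sub_X_pow_mul_lambertTerm (R := R) (n + 1)

variable [TopologicalSpace R] [IsTopologicalRing R]

lemma continuous_derivative : Continuous (d⁄dX R) := by
  refine continuous_iff_continuousAt.mpr fun f ↦ ?_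
  rw [ContinuousAt, WithPiTopology.tendsto_iff_coeff_tendsto]
  intro n
  simp only [coeff_derivative]
  exact ((WithPiTopology.continuous_coeff R (n + 1)).mul continuous_const).tendsto f

lemma X_mul_derivative_euler [T2Space R] : X * d⁄dX R euler = -(euler * lambert) := by
  refine tendsto_nhds_unique
    (((continuous_derivative.tendsto euler).comp tendsto_qPoch_one).const_mul X) ?_
  simp only [Function.comp_apply, X_mul_derivative_qPoch_one]
  exact (tendsto_qPoch_one.mul (summable_lambert.tendsto_sum_tsum_nat.comp
    (tendsto_add_atTop_nat 1))).neg

end Derivative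

section OrderComparison

variable {R : Type*} [CommRing R] [NoZeroDivisors R]

lemma eq_zero_of_mul_expand_eq_expand {u f g : R⟦X⟧} {k : ℕ} (hk : k ≠ 0) (hk1 : k ≠ 1)
    (hu : u.order = 1) (h : u * expand k hk f = expand k hk g) : f = 0 := by
  by_contra hf
  have orders := congrArg order h
  rw [order_mul, order_expand, order_expand, hu, ← coe_toNat_order hf, nsmul_eq_mul,
    nsmul_eq_mul] at orders
  have hg : g ≠ 0 := by
    rintro rfl
    rw [order_zero, ENat.mul_top (Nat.cast_ne_zero.mpr hk)] at orders
    exact ENat.natCast_ne_top (1 + k * f.order.toNat) (mod_cast orders)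
  rw [← coe_toNat_order hg] at orders
  norm_cast at orders
  have dvd_one_add : k ∣ 1 + k * f.order.toNat := orders ▸ dvd_mul_right k _
  exact hk1 (Nat.dvd_one.mp ((Nat.dvd_add_left (dvd_mul_right k _)).mp dvd_one_add))

end OrderComparison

section ResidueParts

variable {R : Type*} [CommRing R]

lemma cast_pentagonal_cases (k : ℤ) :
    (pentagonal k : ZMod 5) = 0 ∨ (pentagonal k : ZMod 5) = 2 ∨
      (pentagonal k : ZMod 5) = 1 ∧ (k : ZMod 5) = 1 := by
  have h := congrArg (Int.cast : ℤ → ZMod 5) (two_mul_natCast_pentagonal k)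
  push_cast at h
  generalize (pentagonal k : ZMod 5) = a, (k : ZMod 5) = b at h ⊢
  decide +revert

lemma cast_tri (k : ℤ) : (tri k : ZMod 5) = 3 * (k * (k + 1)) := by
  have h := congrArg (Int.cast : ℤ → ZMod 5) (two_mul_tri k)
  push_cast at h
  rw [← h, ← mul_assoc, show (3 * 2 : ZMod 5) = 1 by decide, one_mul]

lemma pentagonal_one_sub_five_mul (k : ℤ) : pentagonal (1 - 5 * k) = 25 * pentagonal k + 1 := by
  have h₁ := two_mul_natCast_pentagonal (1 - 5 * k)
  have h₂ := two_mul_natCast_pentagonal k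
  zify
  linarith

lemma intCast_negOnePow_one_sub_five_mul (k : ℤ) :
    (Int.negOnePow (1 - 5 * k) : R) = -(Int.negOnePow k : R) := by
  rw [show 1 - 5 * k = 2 * (-2 * k) + (1 - k) by ring, Int.negOnePow_add, Int.negOnePow_two_mul,
    one_mul, Int.negOnePow_sub, Int.negOnePow_one]
  simp

lemma residuePart_intCast_mul_X_pow {m : ℕ} (c : ZMod m) (a : ℤ) {n : ℕ} (h : (n : ZMod m) ≠ c) :
    residuePart c ((a : R⟦X⟧) * X ^ n) = 0 :=
  residuePart_of_mem_of_ne (intCast_mul_X_pow_mem_residueClass a n) h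

variable [TopologicalSpace R] [T2Space R]

lemma residuePart_euler_of_eq_three_or_four {c : ZMod 5} (hc : c = 3 ∨ c = 4) :
    residuePart c (euler : R⟦X⟧) = 0 := by
  rw [← hasSum_euler.tsum_eq]
  refine residuePart_tsum_eq_zero fun k ↦ residuePart_intCast_mul_X_pow c _ fun h ↦ ?_
  rcases hc with rfl | rfl <;> rcases cast_pentagonal_cases k with h' | h' | ⟨h', -⟩ <;>
    exact absurd (h.symm.trans h') (by decide)

lemma residuePart_one_euler [IsTopologicalRing R] :
    residuePart (1 : ZMod 5) (euler : R⟦X⟧) = -(X * expand 25 (by decide) euler) := by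
  have injective : Function.Injective fun k : ℤ ↦ 1 - 5 * k := fun a b h ↦ by simpa using h
  have part_term (k : ℤ) : residuePart (1 : ZMod 5)
      ((Int.negOnePow (1 - 5 * k) : R⟦X⟧) * X ^ pentagonal (1 - 5 * k)) =
      -(X * expand 25 (by decide) ((Int.negOnePow k : R⟦X⟧) * X ^ pentagonal k)) := by
    rw [residuePart_of_mem, pentagonal_one_sub_five_mul, intCast_negOnePow_one_sub_five_mul,
      map_mul, map_pow, expand_X, map_intCast, pow_succ', pow_mul]
    · ring
    · convert intCast_mul_X_pow_mem_residueClass _ _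
      rw [pentagonal_one_sub_five_mul, Nat.cast_add, Nat.cast_mul, Nat.cast_one]
      simp [show (25 : ZMod 5) = 0 from rfl]
  have support_subset : (Function.support fun k : ℤ ↦ residuePart (1 : ZMod 5)
      ((Int.negOnePow k : R⟦X⟧) * X ^ pentagonal k)) ⊆ Set.range fun k : ℤ ↦ 1 - 5 * k := by
    refine fun k hk ↦ ?_
    have class_one : (pentagonal k : ZMod 5) = 1 := by
      by_contra h
      exact hk (residuePart_intCast_mul_X_pow 1 _ h)
    have cast_eq : (k : ZMod 5) = (1 : ℤ) := by
      rcases cast_pentagonal_cases k with h | h | h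
      · exact absurd (class_one.symm.trans h) (by decide)
      · exact absurd (class_one.symm.trans h) (by decide)
      · exact_mod_cast h.2
    obtain ⟨j, hj⟩ := (ZMod.intCast_eq_intCast_iff_dvd_sub k 1 5).mp cast_eq
    exact ⟨j, by grind⟩
  have summable_terms := (hasSum_euler (R := R)).summable
  rw [← hasSum_euler.tsum_eq, residuePart_tsum 1 summable_terms,
    ← injective.tsum_eq support_subset, expand_tsum _ summable_terms,
    ← (summable_expand _ summable_terms).tsum_mul_left, ← tsum_neg]
  exact tsum_congr part_term

lemma residuePart_two_euler_pow_three [IsTopologicalRing R] :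
    residuePart (2 : ZMod 5) (euler ^ 3 : R⟦X⟧) = 0 := by
  rw [euler_pow_three]
  refine residuePart_tsum_eq_zero fun s ↦ ?_
  have tri_ne : (tri s : ZMod 5) ≠ 2 := by
    rw [cast_tri, Int.cast_natCast]
    generalize (s : ZMod 5) = b
    decide +revert
  rw [← mul_assoc]
  exact_mod_cast residuePart_intCast_mul_X_pow (R := R) 2 ((2 * s + 1) * (-1) ^ s) tri_ne

lemma residuePart_three_threeCore [IsTopologicalRing R] :
    residuePart (3 : ZMod 5) (threeCore : R⟦X⟧) = X ^ 8 * expand 25 (by decide) threeCore := by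
  ext n
  rw [coeff_residuePart, coeff_X_pow_mul', coeff_expand]
  have mod_five : (n : ZMod 5) = 3 ↔ n % 5 = 3 := ZMod.natCast_eq_natCast_iff' n 3 5
  simp only [mod_five]
  by_cases h8 : n % 25 = 8
  · obtain ⟨k, rfl⟩ : ∃ k, n = 25 * k + 8 := ⟨n / 25, by omega⟩
    rw [if_pos (by omega), if_pos (by omega), coeff_threeCore_twentyfive_mul_add_eight,
      if_pos (by omega), Nat.add_sub_cancel, Nat.mul_div_cancel_left k (by norm_num)]
  · split_ifs <;> first | rfl | omega | exact coeff_threeCore_of_mod_five_eq_three ‹_› h8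

/-- The exponents `T s + s + 1 + T j + (2 s + 1) j` are congruent to `4` modulo `5` only when the
coefficient `2 s + 1` vanishes. -/
lemma residuePart_four_stNumer_mul_euler_sq :
    residuePart (4 : ZMod 5) (stNumer * euler ^ 2 : (ZMod 5)⟦X⟧) = 0 := by
  rw [stNumer_mul_euler_sq]
  refine residuePart_tsum_eq_zero fun s ↦ ?_
  have summable_theta := summable_partialTheta (R := ZMod 5) (2 * s + 1)
  rw [← mul_assoc, partialTheta, ← summable_theta.tsum_mul_left]
  refine residuePart_tsum_eq_zero fun j ↦ ?_
  by_cases hs : 2 * (s : ZMod 5) + 1 = 0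
  · have coeff_eq_zero : 2 * (s : (ZMod 5)⟦X⟧) + 1 = 0 := by
      simpa only [map_add, map_mul, map_ofNat, map_natCast, map_one, map_zero] using
        congrArg (C (R := ZMod 5)) hs
    rw [coeff_eq_zero, zero_mul, zero_mul, map_zero]
  have exponent_ne : ((tri s + s + 1 + (tri j + (2 * s + 1) * j) : ℕ) : ZMod 5) ≠ 4 := by
    push_cast [cast_tri]
    generalize (s : ZMod 5) = a, (j : ZMod 5) = b at hs ⊢
    decide +revert
  convert residuePart_intCast_mul_X_pow (R := ZMod 5) 4 ((2 * s + 1) * (-1) ^ s * (-1) ^ j)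
    exponent_ne using 2
  push_cast
  ring

end ResidueParts

/-! ### Modulo five -/

instance fact_prime_five : Fact (Nat.Prime 5) := ⟨Nat.prime_five⟩

lemma five_eq_zero : (5 : (ZMod 5)⟦X⟧) = 0 := by
  rw [← map_ofNat (C (R := ZMod 5)), show (OfNat.ofNat 5 : ZMod 5) = 0 from rfl, map_zero]

lemma one_sub_pow_five (x : (ZMod 5)⟦X⟧) : (1 - x) ^ 5 = 1 - x ^ 5 := by
  linear_combination (-x + 2 * x ^ 2 - 2 * x ^ 3 + x ^ 4) * five_eq_zero

lemma one_sub_pow_four (x : (ZMod 5)⟦X⟧) : (1 - x) ^ 4 = 1 + x + x ^ 2 + x ^ 3 + x ^ 4 := by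
  linear_combination (-x + x ^ 2 - x ^ 3) * five_eq_zero

lemma residuePart_two_add_pow_three {R : Type*} [CommRing R] {x y z : R⟦X⟧}
    (hx : x ∈ residueClass (0 : ZMod 5)) (hy : y ∈ residueClass (1 : ZMod 5))
    (hz : z ∈ residueClass (2 : ZMod 5)) :
    residuePart (2 : ZMod 5) ((x + y + z) ^ 3) = 3 * x * (x * z + y ^ 2) := by
  have monomial_mem (i j k : ℕ) :
      x ^ i * y ^ j * z ^ k ∈ residueClass (i • (0 : ZMod 5) + j • 1 + k • 2) :=
    SetLike.mul_mem_graded (SetLike.mul_mem_graded (SetLike.pow_mem_graded i hx)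
      (SetLike.pow_mem_graded j hy)) (SetLike.pow_mem_graded k hz)
  have part_monomial (i j k : ℕ) : residuePart (2 : ZMod 5) (x ^ i * y ^ j * z ^ k) =
      if i • (0 : ZMod 5) + j • 1 + k • 2 = 2 then x ^ i * y ^ j * z ^ k else 0 := by
    split_ifs with h
    exacts [residuePart_of_mem (h ▸ monomial_mem i j k),
      residuePart_of_mem_of_ne (monomial_mem i j k) h]
  have expansion : (x + y + z) ^ 3 = x ^ 3 * y ^ 0 * z ^ 0 + x ^ 0 * y ^ 3 * z ^ 0 +
      x ^ 0 * y ^ 0 * z ^ 3 + 3 • (x ^ 2 * y ^ 1 * z ^ 0) + 3 • (x ^ 2 * y ^ 0 * z ^ 1) +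
      3 • (x ^ 1 * y ^ 2 * z ^ 0) + 3 • (x ^ 0 * y ^ 2 * z ^ 1) + 3 • (x ^ 1 * y ^ 0 * z ^ 2) +
      3 • (x ^ 0 * y ^ 1 * z ^ 2) + 6 • (x ^ 1 * y ^ 1 * z ^ 1) := by
    ring
  rw [expansion]
  simp only [map_add, map_nsmul, part_monomial]
  simp +decide only [if_true, if_false]
  ring

/-- The terms of Euler's product modulo `5` with exponent divisible by `5`. -/
def eulerBase : (ZMod 5)⟦X⟧ := residuePart (0 : ZMod 5) euler

/-- The parameter `u` for which Euler's product modulo `5` is `eulerBase * (1 - u) ^ 2`. -/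
def paramU : (ZMod 5)⟦X⟧ := 2 * residuePart (1 : ZMod 5) euler * eulerBase⁻¹

/-- The image `v` of the parameter `u` under `q ↦ q ^ 3`. -/
def paramV : (ZMod 5)⟦X⟧ := φ paramU

local notation "𝐞" => eulerBase
local notation "𝐮" => paramU
local notation "𝐯" => paramV

lemma isUnit_euler : IsUnit (euler : (ZMod 5)⟦X⟧) := .of_mul_eq_one _ euler_mul_eulerInv

lemma constantCoeff_eulerBase_ne_zero : constantCoeff 𝐞 ≠ 0 := by
  rw [eulerBase, ← coeff_zero_eq_constantCoeff_apply, coeff_residuePart, if_pos Nat.cast_zero,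
    coeff_zero_eq_constantCoeff_apply]
  exact (isUnit_euler.map constantCoeff).ne_zero

lemma eulerBase_mul_inv : 𝐞 * 𝐞⁻¹ = 1 :=
  PowerSeries.mul_inv_cancel _ constantCoeff_eulerBase_ne_zero

lemma isUnit_eulerBase : IsUnit 𝐞 := .of_mul_eq_one _ eulerBase_mul_inv

lemma eulerBase_mem : 𝐞 ∈ residueClass (0 : ZMod 5) := residuePart_mem _ _

lemma eulerBase_mul_paramU : 𝐞 * 𝐮 = 2 * residuePart (1 : ZMod 5) euler := by
  rw [paramU]
  linear_combination 2 * residuePart (1 : ZMod 5) euler * eulerBase_mul_inv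

lemma paramU_mem : 𝐮 ∈ residueClass (1 : ZMod 5) := by
  have two_mul_mem :
      2 * residuePart (1 : ZMod 5) (euler : (ZMod 5)⟦X⟧) ∈ residueClass (1 : ZMod 5) :=
    two_mul (residuePart (1 : ZMod 5) (euler : (ZMod 5)⟦X⟧)) ▸
      add_mem (residuePart_mem _ _) (residuePart_mem _ _)
  rw [paramU, ← add_zero (1 : ZMod 5)]
  exact SetLike.mul_mem_graded two_mul_mem
    (mem_residueClass_zero_of_mul_eq_one eulerBase_mem eulerBase_mul_inv)

lemma euler_eq_sum_residuePart : (euler : (ZMod 5)⟦X⟧) =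
    𝐞 + residuePart (1 : ZMod 5) euler + residuePart (2 : ZMod 5) euler := by
  have split : ∑ c : ZMod 5, residuePart c euler = (euler : (ZMod 5)⟦X⟧) := sum_residuePart euler
  have vanish (c : ZMod 5) (hc : c ∈ univ) (hc' : c ∉ ({0, 1, 2} : Finset (ZMod 5))) :
      residuePart c (euler : (ZMod 5)⟦X⟧) = 0 :=
    residuePart_euler_of_eq_three_or_four (by decide +revert)
  rw [← sum_subset (subset_univ _) vanish, sum_insert (by decide), sum_pair (by decide)] at split
  exact split.symm.trans (add_assoc _ _ _).symm

lemma eulerBase_mul_residuePart_two_euler :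
    𝐞 * residuePart (2 : ZMod 5) euler = -residuePart (1 : ZMod 5) euler ^ 2 := by
  have cube := residuePart_two_add_pow_three eulerBase_mem (residuePart_mem 1 euler)
    (residuePart_mem 2 euler)
  rw [← euler_eq_sum_residuePart, residuePart_two_euler_pow_three] at cube
  refine isUnit_eulerBase.mul_left_cancel ?_
  linear_combination -2 * cube - 𝐞 * (𝐞 * residuePart (2 : ZMod 5) euler +
    residuePart (1 : ZMod 5) euler ^ 2) * five_eq_zero

lemma residuePart_two_euler : residuePart (2 : ZMod 5) euler = 𝐞 * 𝐮 ^ 2 := by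
  refine isUnit_eulerBase.mul_left_cancel ?_
  linear_combination eulerBase_mul_residuePart_two_euler -
    (𝐞 * 𝐮 + 2 * residuePart (1 : ZMod 5) euler) * eulerBase_mul_paramU -
    residuePart (1 : ZMod 5) euler ^ 2 * five_eq_zero

lemma euler_eq_eulerBase_mul : euler = 𝐞 * (1 - 𝐮) ^ 2 := by
  rw [euler_eq_sum_residuePart, residuePart_two_euler]
  linear_combination 2 * eulerBase_mul_paramU + residuePart (1 : ZMod 5) euler * five_eq_zero

lemma X_mul_expand_euler : X * expand 25 (by decide) euler = 2 * 𝐮 * 𝐞 := by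
  linear_combination residuePart_one_euler (R := ZMod 5) - 2 * eulerBase_mul_paramU -
    residuePart (1 : ZMod 5) euler * five_eq_zero

lemma order_paramU : (𝐮).order = 1 := by
  have isUnit_two : IsUnit (2 : (ZMod 5)⟦X⟧) :=
    .of_mul_eq_one 3 (by linear_combination five_eq_zero)
  have orders := congrArg order X_mul_expand_euler
  rwa [order_mul, order_mul, order_mul, order_X, order_zero_of_unit (isUnit_euler.map _),
    order_zero_of_unit isUnit_two, order_zero_of_unit isUnit_eulerBase, add_zero, add_zero,
    zero_add, eq_comm] at orders

lemma isUnit_three_zmod_five : IsUnit ((3 : ℕ) : ZMod 5) := .of_mul_eq_one 2 (by decide)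

lemma paramV_mem : 𝐯 ∈ residueClass (3 : ZMod 5) :=
  expand_mem_residueClass three_ne_zero isUnit_three_zmod_five paramU_mem

lemma expand_eulerBase_mem : φ 𝐞 ∈ residueClass (0 : ZMod 5) :=
  expand_mem_residueClass three_ne_zero isUnit_three_zmod_five eulerBase_mem

lemma isUnit_expand_eulerBase : IsUnit (φ 𝐞) := isUnit_eulerBase.map _

lemma expand_euler_eq : φ euler = φ 𝐞 * (1 - 𝐯) ^ 2 := by
  rw [euler_eq_eulerBase_mul, map_mul, map_pow, map_sub, map_one, paramV]

lemma X_pow_three_mul_expand_expand_euler :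
    X ^ 3 * φ (expand 25 (by decide) euler) = 2 * 𝐯 * φ 𝐞 := by
  rw [← expand_X 3 three_ne_zero, ← map_mul, X_mul_expand_euler, map_mul, map_mul, map_ofNat,
    paramV]

lemma residuePart_paramU_pow_mul_paramV_pow (c : ZMod 5) (i j : ℕ) :
    residuePart c (𝐮 ^ i * 𝐯 ^ j) =
      if i • (1 : ZMod 5) + j • 3 = c then 𝐮 ^ i * 𝐯 ^ j else 0 := by
  have mem : 𝐮 ^ i * 𝐯 ^ j ∈ residueClass (i • (1 : ZMod 5) + j • 3) :=
    SetLike.mul_mem_graded (SetLike.pow_mem_graded i paramU_mem)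
      (SetLike.pow_mem_graded j paramV_mem)
  split_ifs with h
  exacts [residuePart_of_mem (h ▸ mem), residuePart_of_mem_of_ne mem h]

lemma one_sub_pow_five_mem {c : ZMod 5} {f : (ZMod 5)⟦X⟧} (hf : f ∈ residueClass c) :
    1 - f ^ 5 ∈ residueClass (0 : ZMod 5) := by
  have five_nsmul : ∀ d : ZMod 5, 5 • d = 0 := by decide
  exact sub_mem (SetLike.one_mem_graded _) (five_nsmul c ▸ SetLike.pow_mem_graded 5 hf)

lemma isUnit_one_sub_pow_five {c : ZMod 5} {f : (ZMod 5)⟦X⟧} (hf : f ∈ residueClass c)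
    (hc : c ≠ 0) : IsUnit (1 - f ^ 5) := by
  have coeff_zero : constantCoeff f = 0 :=
    coeff_zero_eq_constantCoeff_apply f ▸ hf 0 (by simpa using hc.symm)
  simp [isUnit_iff_constantCoeff, coeff_zero]

lemma mul_residuePart_three_threeCore :
    (1 - 𝐮 ^ 5) * 𝐞 * residuePart (3 : ZMod 5) threeCore =
      -(φ 𝐞 ^ 3 * (1 - 𝐯 ^ 5) * (𝐮 ^ 3 + 𝐯)) := by
  have cleared : (1 - 𝐮 ^ 5) * 𝐞 * threeCore =
      φ 𝐞 ^ 3 * (1 - 𝐯 ^ 5) * ((1 - 𝐯) * (1 - 𝐮) ^ 3) := by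
    have core := euler_mul_eulerInv (R := ZMod 5)
    rw [threeCore, ← one_sub_pow_five, ← one_sub_pow_five, expand_euler_eq]
    rw [euler_eq_eulerBase_mul] at core
    linear_combination (1 - 𝐮) ^ 3 * (φ 𝐞 * (1 - 𝐯) ^ 2) ^ 3 * core
  have mem_left : (1 - 𝐮 ^ 5) * 𝐞 ∈ residueClass (0 : ZMod 5) :=
    SetLike.mul_mem_graded (one_sub_pow_five_mem paramU_mem) eulerBase_mem
  have mem_right : φ 𝐞 ^ 3 * (1 - 𝐯 ^ 5) ∈ residueClass (0 : ZMod 5) :=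
    SetLike.mul_mem_graded (SetLike.pow_mem_graded 3 expand_eulerBase_mem)
      (one_sub_pow_five_mem paramV_mem)
  have expansion : (1 - 𝐯) * (1 - 𝐮) ^ 3 = 𝐮 ^ 0 * 𝐯 ^ 0 - 3 • (𝐮 ^ 1 * 𝐯 ^ 0) +
      3 • (𝐮 ^ 2 * 𝐯 ^ 0) - 𝐮 ^ 3 * 𝐯 ^ 0 - 𝐮 ^ 0 * 𝐯 ^ 1 + 3 • (𝐮 ^ 1 * 𝐯 ^ 1) -
      3 • (𝐮 ^ 2 * 𝐯 ^ 1) + 𝐮 ^ 3 * 𝐯 ^ 1 := by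
    ring
  have part_three : residuePart (3 : ZMod 5) ((1 - 𝐯) * (1 - 𝐮) ^ 3) = -(𝐮 ^ 3 + 𝐯) := by
    rw [expansion]
    simp only [map_add, map_sub, map_nsmul, residuePart_paramU_pow_mul_paramV_pow]
    simp +decide only [if_true, if_false]
    ring
  have parts := congrArg (residuePart (3 : ZMod 5)) cleared
  rw [residuePart_mul_of_mem mem_left, residuePart_mul_of_mem mem_right, sub_zero,
    part_three] at parts
  linear_combination parts

lemma residuePart_three_threeCore_mul :
    residuePart (3 : ZMod 5) threeCore * (𝐮 * 𝐞) = -(𝐯 ^ 3 * φ 𝐞 ^ 3) := by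
  have product : expand 25 (by decide) threeCore * expand 25 (by decide) euler =
      φ (expand 25 (by decide) (euler : (ZMod 5)⟦X⟧)) ^ 3 := by
    rw [← map_mul, ← expand_mul, threeCore, mul_assoc, mul_comm eulerInv, euler_mul_eulerInv,
      mul_one, map_pow, ← expand_mul]
  have scaled : residuePart (3 : ZMod 5) threeCore * (2 * 𝐮 * 𝐞) = (2 * 𝐯 * φ 𝐞) ^ 3 := by
    rw [residuePart_three_threeCore, ← X_mul_expand_euler, ← X_pow_three_mul_expand_expand_euler]
    linear_combination X ^ 9 * product
  linear_combination 3 * scaled - (residuePart (3 : ZMod 5) threeCore * 𝐮 * 𝐞 -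
    5 * 𝐯 ^ 3 * φ 𝐞 ^ 3) * five_eq_zero

lemma paramU_ne_paramV_sq : 𝐮 - 𝐯 ^ 2 ≠ 0 := by
  intro h
  have eq : 𝐮 * φ 1 = φ (𝐮 ^ 2) := by
    rw [map_one, mul_one, map_pow]
    exact sub_eq_zero.mp h
  exact one_ne_zero (eq_zero_of_mul_expand_eq_expand three_ne_zero (by decide) order_paramU eq)

lemma paramU_paramV_relation : 𝐯 + 𝐮 ^ 3 + 𝐮 ^ 2 * 𝐯 ^ 2 + 𝐮 * 𝐯 ^ 4 + 𝐮 ^ 4 * 𝐯 ^ 3 = 0 := by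
  have product : φ 𝐞 ^ 3 * ((𝐮 - 𝐯 ^ 2) *
      (𝐯 + 𝐮 ^ 3 + 𝐮 ^ 2 * 𝐯 ^ 2 + 𝐮 * 𝐯 ^ 4 + 𝐮 ^ 4 * 𝐯 ^ 3)) = 0 := by
    linear_combination 𝐮 * mul_residuePart_three_threeCore -
      (1 - 𝐮 ^ 5) * residuePart_three_threeCore_mul
  exact (mul_eq_zero_iff_left paramU_ne_paramV_sq).mp
    (((isUnit_expand_eulerBase.pow 3).mul_right_eq_zero).mp product)

lemma lambert_mul_one_sub_paramU : lambert * (1 - 𝐮) = 2 * 𝐮 := by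
  have deriv_parts : X * d⁄dX (ZMod 5) (euler : (ZMod 5)⟦X⟧) =
      residuePart (1 : ZMod 5) euler + 2 * residuePart (2 : ZMod 5) euler := by
    conv_lhs => rw [euler_eq_sum_residuePart]
    rw [map_add, map_add, mul_add, mul_add,
      X_mul_derivative_of_mem_residueClass eulerBase_mem,
      X_mul_derivative_of_mem_residueClass (residuePart_mem 1 euler),
      X_mul_derivative_of_mem_residueClass (residuePart_mem 2 euler), map_zero, map_one, map_ofNat]
    ring
  have isUnit_one_sub : IsUnit (𝐞 * (1 - 𝐮)) := by
    refine isUnit_of_mul_isUnit_left (y := 1 - 𝐮) ?_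
    rw [mul_assoc, ← sq, ← euler_eq_eulerBase_mul]
    exact isUnit_euler
  refine isUnit_one_sub.mul_left_cancel ?_
  have deriv := deriv_parts.symm.trans X_mul_derivative_euler
  rw [residuePart_two_euler] at deriv
  linear_combination deriv - lambert * euler_eq_eulerBase_mul - 2 * eulerBase_mul_paramU -
    residuePart (1 : ZMod 5) euler * five_eq_zero

/-- The series `γ` for which the part of `stNumer * eulerInv` that depends on `lambertTheta` is,
up to factors with exponents divisible by `5`, equal to `φ γ`. -/
def thetaCorrection : (ZMod 5)⟦X⟧ := (1 + 𝐮 + 𝐮 ^ 2 + 𝐮 ^ 3 + 𝐮 ^ 4) * (lambertTheta - lambert)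

/-- The common denominator `φ eulerBase ^ 3 * (1 - v ^ 5) ^ 2`, a unit with exponents divisible
by `5`. -/
def commonDenom : (ZMod 5)⟦X⟧ := φ 𝐞 ^ 3 * (1 - 𝐯 ^ 5) ^ 2

local notation "Γ" => φ thetaCorrection

lemma commonDenom_mem : commonDenom ∈ residueClass (0 : ZMod 5) := by
  rw [commonDenom]
  exact SetLike.mul_mem_graded (SetLike.pow_mem_graded 3 expand_eulerBase_mem)
    (SetLike.pow_mem_graded 2 (one_sub_pow_five_mem paramV_mem))

lemma isUnit_commonDenom : IsUnit commonDenom := by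
  rw [commonDenom]
  exact (isUnit_expand_eulerBase.pow 3).mul ((isUnit_one_sub_pow_five paramV_mem (by decide)).pow 2)

lemma stNumer_mul_eulerInv_mul_commonDenom :
    stNumer * eulerInv * commonDenom * (1 - 𝐮) =
      2 * (𝐮 * (1 + 𝐯 + 𝐯 ^ 2 + 𝐯 ^ 3 + 𝐯 ^ 4)) + (1 - 𝐮) * Γ := by
  have correction : Γ =
      (1 + 𝐯 + 𝐯 ^ 2 + 𝐯 ^ 3 + 𝐯 ^ 4) * (φ lambertTheta - φ lambert) := by
    simp only [thetaCorrection, paramV, map_mul, map_add, map_sub, map_pow, map_one]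
  have numer := stNumer_mul_expand_euler_pow_three (R := ZMod 5)
  have inv := euler_mul_eulerInv (R := ZMod 5)
  rw [lambertPair_eq, expand_euler_eq] at numer
  rw [correction, commonDenom, ← one_sub_pow_five, ← one_sub_pow_four]
  linear_combination (1 - 𝐮) * (1 - 𝐯) ^ 4 * (eulerInv * numer +
    (lambert - φ lambert + φ lambertTheta) * inv) + (1 - 𝐯) ^ 4 * lambert_mul_one_sub_paramU

lemma commonDenom_mul_stNumer_mul_euler_sq :
    commonDenom * (stNumer * euler ^ 2) = 𝐞 ^ 3 * (1 - 𝐮 ^ 5) *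
      (2 • (𝐮 * (1 + 𝐯 + 𝐯 ^ 2 + 𝐯 ^ 3 + 𝐯 ^ 4)) + (Γ - 𝐮 * Γ)) := by
  have inv := euler_mul_eulerInv (R := ZMod 5)
  rw [euler_eq_eulerBase_mul] at inv ⊢
  rw [← one_sub_pow_five]
  linear_combination 𝐞 ^ 3 * (1 - 𝐮) ^ 5 * stNumer_mul_eulerInv_mul_commonDenom -
    𝐞 ^ 2 * (1 - 𝐮) ^ 4 * commonDenom * stNumer * inv

lemma paramU_mul_residuePart_three_sub :
    𝐮 * (residuePart (3 : ZMod 5) Γ - 2 * 𝐯) = residuePart (4 : ZMod 5) Γ := by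
  have mem : 𝐞 ^ 3 * (1 - 𝐮 ^ 5) ∈ residueClass (0 : ZMod 5) :=
    SetLike.mul_mem_graded (SetLike.pow_mem_graded 3 eulerBase_mem)
      (one_sub_pow_five_mem paramU_mem)
  have isUnit_factor : IsUnit (𝐞 ^ 3 * (1 - 𝐮 ^ 5)) :=
    (isUnit_eulerBase.pow 3).mul (isUnit_one_sub_pow_five paramU_mem one_ne_zero)
  have expansion : 𝐮 * (1 + 𝐯 + 𝐯 ^ 2 + 𝐯 ^ 3 + 𝐯 ^ 4) = 𝐮 ^ 1 * 𝐯 ^ 0 + 𝐮 ^ 1 * 𝐯 ^ 1 +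
      𝐮 ^ 1 * 𝐯 ^ 2 + 𝐮 ^ 1 * 𝐯 ^ 3 + 𝐮 ^ 1 * 𝐯 ^ 4 := by
    ring
  have part_four : residuePart (4 : ZMod 5) (𝐮 * (1 + 𝐯 + 𝐯 ^ 2 + 𝐯 ^ 3 + 𝐯 ^ 4)) = 𝐮 * 𝐯 := by
    rw [expansion]
    simp only [map_add, residuePart_paramU_pow_mul_paramV_pow]
    simp +decide only [if_true, if_false]
    ring
  have parts := congrArg (residuePart (4 : ZMod 5)) commonDenom_mul_stNumer_mul_euler_sq
  rw [residuePart_mul_of_mem commonDenom_mem, sub_zero, residuePart_four_stNumer_mul_euler_sq,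
    mul_zero, residuePart_mul_of_mem mem, sub_zero, eq_comm, isUnit_factor.mul_right_eq_zero,
    map_add, map_nsmul, part_four, map_sub, residuePart_mul_of_mem paramU_mem,
    show (4 - 1 : ZMod 5) = 3 by decide] at parts
  linear_combination -parts

lemma residuePart_four_expand_thetaCorrection : residuePart (4 : ZMod 5) Γ = 0 := by
  have part_three : residuePart (3 : ZMod 5) Γ = φ (residuePart 1 thetaCorrection) :=
    residuePart_expand three_ne_zero isUnit_three_zmod_five 1 thetaCorrection
  have part_four : residuePart (4 : ZMod 5) Γ = φ (residuePart 3 thetaCorrection) :=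
    residuePart_expand three_ne_zero isUnit_three_zmod_five 3 thetaCorrection
  have two_mul_paramV : 2 * 𝐯 = φ (2 * 𝐮) := by rw [map_mul, map_ofNat, paramV]
  have expanded := paramU_mul_residuePart_three_sub
  rw [part_three, part_four, two_mul_paramV, ← map_sub] at expanded
  have vanish := eq_zero_of_mul_expand_eq_expand three_ne_zero (by decide) order_paramU expanded
  rw [part_four, ← expanded, vanish, map_zero, mul_zero]

theorem residuePart_four_stNumer_mul_eulerInv :
    residuePart (4 : ZMod 5) (stNumer * eulerInv : (ZMod 5)⟦X⟧) = 0 := by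
  have cleared : commonDenom * (1 - 𝐮 ^ 5) * (stNumer * eulerInv) =
      2 • ∑ i ∈ range 5, ∑ j ∈ range 5, 𝐮 ^ (i + 1) * 𝐯 ^ j + (1 - 𝐮 ^ 5) * Γ := by
    simp only [sum_range_succ, sum_range_zero]
    rw [← one_sub_pow_five]
    linear_combination (1 - 𝐮) ^ 4 * stNumer_mul_eulerInv_mul_commonDenom +
      2 * 𝐮 * (1 + 𝐯 + 𝐯 ^ 2 + 𝐯 ^ 3 + 𝐯 ^ 4) * one_sub_pow_four 𝐮
  have part_four : residuePart (4 : ZMod 5)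
      (∑ i ∈ range 5, ∑ j ∈ range 5, 𝐮 ^ (i + 1) * 𝐯 ^ j) = 0 := by
    simp only [sum_range_succ, sum_range_zero, map_add, residuePart_paramU_pow_mul_paramV_pow]
    simp +decide only [map_zero, if_true, if_false]
    linear_combination 𝐮 * paramU_paramV_relation
  have mem : commonDenom * (1 - 𝐮 ^ 5) ∈ residueClass (0 : ZMod 5) :=
    SetLike.mul_mem_graded commonDenom_mem (one_sub_pow_five_mem paramU_mem)
  have isUnit_factor : IsUnit (commonDenom * (1 - 𝐮 ^ 5)) :=
    isUnit_commonDenom.mul (isUnit_one_sub_pow_five paramU_mem one_ne_zero)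
  have parts := congrArg (residuePart (4 : ZMod 5)) cleared
  rwa [residuePart_mul_of_mem mem, sub_zero, map_add, map_nsmul, part_four, smul_zero, zero_add,
    residuePart_mul_of_mem (one_sub_pow_five_mem paramU_mem), sub_zero,
    residuePart_four_expand_thetaCorrection, mul_zero, isUnit_factor.mul_right_eq_zero] at parts

/-! ### The generating function of partition pairs -/

section GeneratingFunctions

variable {R : Type*} [CommRing R] [TopologicalSpace R]

lemma hasProd_ite_lt {M : Type*} [CommMonoid M] [TopologicalSpace M] (f : ℕ → M) (n : ℕ) :
    HasProd (fun i ↦ if i < n then f i else 1) (∏ i ∈ range n, f i) := by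
  rw [prod_congr rfl fun i hi ↦ (if_pos (mem_range.mp hi)).symm]
  exact hasProd_prod_of_ne_finset_one fun i hi ↦ if_neg (mem_range.not.mp hi)

variable [T2Space R] [IsTopologicalRing R]

lemma tsum_X_pow_mul_eq_invOfUnit (i : ℕ) :
    ∑' j, (X ^ ((i + 1) * j) : R⟦X⟧) = invOfUnit (1 - X ^ (1 + i)) 1 := by
  have geometric : (∑' j, (X ^ (1 + i) : R⟦X⟧) ^ j) * (1 - X ^ (1 + i)) = 1 :=
    WithPiTopology.tsum_pow_mul_one_sub_of_constantCoeff_eq_zero (by simp)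
  simp only [pow_mul, add_comm i]
  refine (isUnit_one_sub_X_pow (n := 1 + i) (by omega)).mul_right_cancel ?_
  rw [geometric, mul_comm, one_sub_X_pow_mul_invOfUnit (by omega)]

lemma hasProd_card_restricted (p : ℕ → Prop) [DecidablePred p] :
    HasProd (fun i ↦ if p (i + 1) then invOfUnit (1 - X ^ (1 + i) : R⟦X⟧) 1 else 1)
      (mk fun n ↦ (#(Nat.Partition.restricted n p) : R)) := by
  simpa only [tsum_X_pow_mul_eq_invOfUnit] using
    Nat.Partition.hasProd_powerSeriesMk_card_restricted R p

lemma mk_card_restricted_le (m : ℕ) :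
    (mk fun n ↦ (#(Nat.Partition.restricted n (m + 1 ≤ ·)) : R)) = qPoch 1 m * eulerInv := by
  refine (hasProd_card_restricted _).unique ?_
  rw [qPoch, eulerInv]
  convert (hasProd_ite_lt (fun i ↦ 1 - X ^ (1 + i)) m).mul
    (multipliable_invOfUnit_one_sub_X_pow (R := R)).hasProd using 2 with i
  split_ifs with h h'
  · omega
  · rw [one_mul]
  · rw [one_sub_X_pow_mul_invOfUnit (by omega)]
  · omega

lemma mk_card_restricted_le_and_lt (m : ℕ) :
    (mk fun n ↦ (#(Nat.Partition.restricted n fun x ↦ m + 1 ≤ x ∧ x < 2 * (m + 1)) : R)) =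
      qPoch 1 m * qFactInv (2 * m + 1) := by
  refine (hasProd_card_restricted _).unique ?_
  rw [qPoch, qFactInv]
  convert (hasProd_ite_lt (fun i ↦ 1 - X ^ (1 + i)) m).mul
    (hasProd_ite_lt (fun i ↦ invOfUnit (1 - X ^ (1 + i) : R⟦X⟧) 1) (2 * m + 1)) using 2 with i
  split_ifs
  any_goals omega
  · rw [one_mul]
  · rw [one_sub_X_pow_mul_invOfUnit (by omega)]
  · rw [one_mul]

end GeneratingFunctions

section Counting

lemma sPart_eq_inf_map (π : Multiset ℕ) : sPart π = (π.map (fun x : ℕ ↦ (x : ℕ∞))).inf := by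
  simp [sPart]

lemma sPart_cons {m : ℕ} {π : Multiset ℕ} (h : ∀ x ∈ π, m ≤ x) : sPart (m ::ₘ π) = m := by
  rw [sPart_eq_inf_map, Multiset.map_cons, Multiset.inf_cons, inf_eq_left, Multiset.le_inf]
  simpa using h

lemma natCast_le_sPart {m : ℕ} {π : Multiset ℕ} : (m : ℕ∞) ≤ sPart π ↔ ∀ x ∈ π, m ≤ x := by
  simp [sPart_eq_inf_map, Multiset.le_inf]

lemma lPart_lt {m : ℕ} (hm : 0 < m) {π : Multiset ℕ} : lPart π < m ↔ ∀ x ∈ π, x < m := by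
  obtain ⟨k, rfl⟩ := Nat.exists_eq_succ_of_ne_zero hm.ne'
  simp only [Nat.lt_succ_iff, lPart, Multiset.sup_le]

lemma exists_eq_cons_of_ne_zero {π : Multiset ℕ} (h : π ≠ 0) :
    ∃ m ρ, π = m ::ₘ ρ ∧ ∀ x ∈ ρ, m ≤ x := by
  obtain ⟨m, hm, hmin⟩ := π.toFinset.exists_min_image id (by simpa using h)
  simp only [Multiset.mem_toFinset, id] at hm hmin
  obtain ⟨ρ, rfl⟩ := Multiset.exists_cons_of_mem hm
  exact ⟨m, ρ, rfl, fun x hx ↦ hmin x (Multiset.mem_cons_of_mem hx)⟩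

lemma inST_iff {p : Multiset ℕ × Multiset ℕ} : InST p ↔ ∃ m ρ, p.1 = (m + 1) ::ₘ ρ ∧
    (∀ x ∈ ρ, m + 1 ≤ x) ∧ ∀ x ∈ p.2, m + 1 ≤ x ∧ x < 2 * (m + 1) := by
  have bounds {m : ℕ} {ρ σ : Multiset ℕ} (hρ : ∀ x ∈ ρ, m + 1 ≤ x) :
      sPart ((m + 1) ::ₘ ρ) ≤ sPart σ ∧ (lPart σ : ℕ∞) < 2 * sPart ((m + 1) ::ₘ ρ) ↔
        ∀ x ∈ σ, m + 1 ≤ x ∧ x < 2 * (m + 1) := by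
    rw [sPart_cons hρ, natCast_le_sPart, forall₂_and, ← lPart_lt (by omega)]
    norm_cast
  obtain ⟨π, σ⟩ := p
  constructor
  · rintro ⟨pos, -, ne_zero, h⟩
    obtain ⟨m, ρ, rfl, hρ⟩ := exists_eq_cons_of_ne_zero ne_zero
    obtain ⟨m, rfl⟩ := Nat.exists_eq_succ_of_ne_zero (pos m (Multiset.mem_cons_self m ρ)).ne'
    exact ⟨m, ρ, rfl, hρ, (bounds hρ).mp h⟩
  · rintro ⟨m, ρ, rfl, hρ, hσ⟩
    refine ⟨?_, fun x hx ↦ ?_, Multiset.cons_ne_zero, (bounds hρ).mpr hσ⟩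
    · simpa [IsPartition] using fun x hx ↦ Nat.zero_lt_of_lt (hρ x hx)
    · exact Nat.zero_lt_of_lt (hσ x hx).1

/-- The pairs in `𝒮𝒯` of total size `n` whose smallest part is `m + 1`, encoded by the remaining
parts of the first partition and by the second partition. -/
def remainders (n m : ℕ) : Finset (Σ s : ℕ × ℕ, s.1.Partition × s.2.Partition) :=
  (antidiagonal (n - (m + 1))).sigma fun s ↦
    Nat.Partition.restricted s.1 (m + 1 ≤ ·) ×ˢ
      Nat.Partition.restricted s.2 fun x ↦ m + 1 ≤ x ∧ x < 2 * (m + 1)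

/-- The pair of partitions encoded by a smallest part `m + 1` and an element of
`remainders n m`. -/
def pairOfRemainders (t : Σ _ : ℕ, Σ s : ℕ × ℕ, s.1.Partition × s.2.Partition) :
    Multiset ℕ × Multiset ℕ := ((t.1 + 1) ::ₘ t.2.2.1.parts, t.2.2.2.parts)

lemma mem_remainders {n m i j : ℕ} {ρ : i.Partition} {σ : j.Partition} :
    ⟨(i, j), ρ, σ⟩ ∈ remainders n m ↔ i + j = n - (m + 1) ∧ (∀ x ∈ ρ.parts, m + 1 ≤ x) ∧
      ∀ x ∈ σ.parts, m + 1 ≤ x ∧ x < 2 * (m + 1) := by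
  simp [remainders, Nat.Partition.restricted]

lemma injOn_pairOfRemainders (n : ℕ) :
    Set.InjOn pairOfRemainders ((range n).sigma (remainders n)) := by
  rintro ⟨m, ⟨i, j⟩, ρ, σ⟩ ht ⟨m', ⟨i', j'⟩, ρ', σ'⟩ ht' h
  simp only [coe_sigma, Set.mem_sigma_iff, mem_coe] at ht ht'
  obtain ⟨first, second : σ.parts = σ'.parts⟩ := Prod.mk.inj h
  have smallest := congrArg sPart first
  rw [sPart_cons (mem_remainders.mp ht.2).2.1, sPart_cons (mem_remainders.mp ht'.2).2.1] at smallest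
  obtain rfl : m = m' := by simpa using smallest
  have rest : ρ.parts = ρ'.parts := (Multiset.cons_inj_right _).mp first
  obtain rfl : i = i' := ρ.parts_sum.symm.trans ((congrArg _ rest).trans ρ'.parts_sum)
  obtain rfl : j = j' := σ.parts_sum.symm.trans ((congrArg _ second).trans σ'.parts_sum)
  obtain rfl : ρ = ρ' := Nat.Partition.ext rest
  obtain rfl : σ = σ' := Nat.Partition.ext second
  rfl

lemma setOf_inST_eq_image_pairOfRemainders (n : ℕ) :
    {p | InST p ∧ p.1.sum + p.2.sum = n} =
      pairOfRemainders '' ((range n).sigma (remainders n)) := by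
  ext ⟨π, σ⟩
  simp only [inST_iff, coe_sigma, Set.mem_image]
  constructor
  · rintro ⟨⟨m, ρ, rfl, hρ, hσ⟩, size⟩
    have size : m + 1 + ρ.sum + σ.sum = n := by rwa [Multiset.sum_cons] at size
    have hm : m < n := by omega
    have remaining : ρ.sum + σ.sum = n - (m + 1) := by omega
    exact ⟨⟨m, (ρ.sum, σ.sum), ⟨ρ, fun hx ↦ Nat.zero_lt_of_lt (hρ _ hx), rfl⟩,
      ⟨σ, fun hx ↦ Nat.zero_lt_of_lt (hσ _ hx).1, rfl⟩⟩,
      ⟨mem_range.mpr hm, mem_remainders.mpr ⟨remaining, hρ, hσ⟩⟩, rfl⟩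
  · rintro ⟨⟨m, ⟨i, j⟩, ρ, τ⟩, ⟨hm, ht⟩, h⟩
    obtain ⟨rfl, rfl : τ.parts = σ⟩ := Prod.mk.inj h
    obtain ⟨remaining : i + j = n - (m + 1), hρ, hτ⟩ := mem_remainders.mp ht
    have hm : m < n := mem_range.mp hm
    refine ⟨⟨m, ρ.parts, rfl, hρ, hτ⟩, ?_⟩
    change ((m + 1) ::ₘ ρ.parts).sum + τ.parts.sum = n
    rw [Multiset.sum_cons, ρ.parts_sum, τ.parts_sum]
    omega

lemma sT_eq_sum_card_remainders (n : ℕ) : sT n = ∑ m ∈ range n, #(remainders n m) := by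
  rw [sT, setOf_inST_eq_image_pairOfRemainders, (injOn_pairOfRemainders n).ncard_image,
    Set.ncard_coe_finset, card_sigma]

variable {R : Type*} [CommRing R] [TopologicalSpace R] [T2Space R] [IsTopologicalRing R]

lemma coeff_X_pow_mul_card_remainders {n m : ℕ} (h : m < n) :
    coeff n (X ^ (m + 1) * (qPoch 1 m * eulerInv * (qPoch 1 m * qFactInv (2 * m + 1))) : R⟦X⟧) =
      #(remainders n m) := by
  rw [coeff_X_pow_mul', if_pos (Nat.succ_le_of_lt h), ← mk_card_restricted_le,
    ← mk_card_restricted_le_and_lt, coeff_mul, remainders, card_sigma]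
  simp only [coeff_mk, card_product, Nat.cast_sum, Nat.cast_mul]

theorem mk_sT : (mk fun n ↦ (sT n : R)) = stNumer * eulerInv := by
  let term (m : ℕ) : R⟦X⟧ :=
    X ^ (m + 1) * (qPoch 1 m * eulerInv * (qPoch 1 m * qFactInv (2 * m + 1)))
  have summable_numer : Summable fun m ↦
      (X ^ (m + 1) * (qPoch 1 m ^ 2 * qFactInv (2 * m + 1)) : R⟦X⟧) :=
    summable_nat_of_X_pow_dvd fun m ↦ (pow_dvd_pow X m.le_succ).mul_right _
  have summable_term : Summable term :=
    summable_nat_of_X_pow_dvd fun m ↦ (pow_dvd_pow X m.le_succ).mul_right _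
  have eq_tsum : stNumer * eulerInv = ∑' m, term m := by
    rw [stNumer, ← summable_numer.tsum_mul_right]
    exact tsum_congr fun m ↦ by simp only [term]; ring
  ext n
  rw [eq_tsum, coeff_tsum summable_term, coeff_mk, sT_eq_sum_card_remainders, Nat.cast_sum,
    tsum_eq_sum (s := range n)]
  · exact sum_congr rfl fun m hm ↦ (coeff_X_pow_mul_card_remainders (mem_range.mp hm)).symm
  · intro m hm
    exact X_pow_dvd_iff.mp (dvd_mul_right _ _) n (by simpa [Nat.lt_succ_iff] using hm)

end Counting

end PartitionPair

theorem sT_five_n_plus_four_mod_five (n : ℕ) : 5 ∣ sT (5 * n + 4) := by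
  have five_mul_add_four : ((5 * n + 4 : ℕ) : ZMod 5) = 4 := by
    rw [Nat.cast_add, Nat.cast_mul, ZMod.natCast_self, zero_mul, zero_add, Nat.cast_ofNat]
  have part := congrArg (PowerSeries.coeff (5 * n + 4))
    PartitionPair.residuePart_four_stNumer_mul_eulerInv
  rw [PartitionPair.coeff_residuePart, if_pos five_mul_add_four, ← PartitionPair.mk_sT,
    PowerSeries.coeff_mk, map_zero] at part
  exact (ZMod.natCast_eq_zero_iff _ _).mp part
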